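/- arXiv:2001.00654 — 2 statements merged into one kernel-verified Lean document; each statement's English description precedes it below -/
import Mathlib

section
/- Let n ≥ 2. If n is a power of 2, then n · Σ_{π ∈ 𝔠_n} t^{lpk(π)} = P_n^{lpk}(t) − (1−t)^{n/2}; otherwise, n · Σ_{π ∈ 𝔠_n} t^{lpk(π)} = Σ_{d ∣ n, d odd} μ(d) (1−t)^{(n−n/d)/2} P_{n/d}^{lpk}(t), as identities of polynomials in ℚ[t], where P_m^{lpk}(t) = Σ_{π ∈ S_m} t^{lpk(π)}. (For d an odd divisor of n, the exponent (n−n/d)/2 = (n/d)(d−1)/2 is a nonnegative integer.) -/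
open scoped Classical

noncomputable section

def oneLine (n : ℕ) (π : Equiv.Perm (Fin n)) (i : ℕ) : ℕ :=
  if h : 1 ≤ i ∧ i ≤ n then (π ⟨i - 1, by omega⟩).val + 1 else 0

def des (n : ℕ) (π : Equiv.Perm (Fin n)) : ℕ :=
  ((Finset.Icc 1 (n - 1)).filter fun i => oneLine n π (i + 1) < oneLine n π i).card

def pk (n : ℕ) (π : Equiv.Perm (Fin n)) : ℕ :=
  ((Finset.Icc 2 (n - 1)).filter fun i =>
    oneLine n π (i - 1) < oneLine n π i ∧ oneLine n π (i + 1) < oneLine n π i).card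

def lpk (n : ℕ) (π : Equiv.Perm (Fin n)) : ℕ :=
  ((Finset.Icc 1 (n - 1)).filter fun i =>
    oneLine n π (i - 1) < oneLine n π i ∧ oneLine n π (i + 1) < oneLine n π i).card

def pval (n : ℕ) (π : Equiv.Perm (Fin n)) : ℕ :=
  ((Finset.Icc 2 (n - 1)).filter fun i =>
    oneLine n π i < oneLine n π (i - 1) ∧ oneLine n π i < oneLine n π (i + 1)).card

def udr (n : ℕ) (π : Equiv.Perm (Fin n)) : ℕ := lpk n π + pval n π + 1

def fullCycleType (n : ℕ) (π : Equiv.Perm (Fin n)) : Multiset ℕ :=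
  π.cycleType + Multiset.replicate (n - π.support.card) 1

def numCycles (n : ℕ) (π : Equiv.Perm (Fin n)) : ℕ := Multiset.card (fullCycleType n π)

def numOddCycles (n : ℕ) (π : Equiv.Perm (Fin n)) : ℕ :=
  Multiset.card ((fullCycleType n π).filter fun p => p % 2 = 1)

def IsCyclicPerm (n : ℕ) (π : Equiv.Perm (Fin n)) : Prop :=
  fullCycleType n π = {n}

def cyclicSet (n : ℕ) : Finset (Equiv.Perm (Fin n)) :=
  Finset.univ.filter fun π => IsCyclicPerm n π

def invSet (n : ℕ) : Finset (Equiv.Perm (Fin n)) :=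
  Finset.univ.filter fun π => π ^ 2 = 1

def eulerianA (m : ℕ) : Polynomial ℚ :=
  ∑ π : Equiv.Perm (Fin m), Polynomial.X ^ (des m π + 1)

def peakP (m : ℕ) : Polynomial ℚ :=
  ∑ π : Equiv.Perm (Fin m), Polynomial.X ^ (pk m π + 1)

def leftPeakP (m : ℕ) : Polynomial ℚ :=
  ∑ π : Equiv.Perm (Fin m), Polynomial.X ^ (lpk m π)

def cnk (n k : ℕ) : ℕ :=
  (Finset.univ.filter fun π : Equiv.Perm (Fin n) =>
    (∀ p ∈ fullCycleType n π, ¬ (4 ∣ p)) ∧ numCycles n (π ^ 2) = k).card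

def bnk (n k : ℕ) : ℕ :=
  (Finset.univ.filter fun π : Equiv.Perm (Fin n) => numCycles n (π ^ 2) = k).card

def dnk (n k : ℕ) : ℕ :=
  (Finset.univ.filter fun π : Equiv.Perm (Fin n) => numOddCycles n (π ^ 2) = k).card

/-!
Petersen's left enriched order polynomials see exactly the number of left peaks: the generating
function `∑ k, Ω_π(k) X ^ k` of the numbers of left enriched `π`-partitions with letters in
`{-k, …, k}` is, up to a factor depending on `n` only, the power `y ^ lpk π` of
`y = 4 X / (1 + X) ^ 2`. As `y` is transcendental, it suffices to compute the sum of `Ω_π(k)` over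
the cyclic permutations. Writing them as conjugates `ρ c ρ⁻¹` of a fixed `n`-cycle `c`, this amounts
to counting the pairs of a word `w` and a permutation `ρ` that sorts the positions by their letters
and breaks ties between equal letters by the images under `c`, with the sign of the letter.
Unfolding the ties along the cycle, `ρ` must sort the signed itineraries of the positions. So `ρ`
exists uniquely if `w` is primitive; there are two choices if `w = v v` with `v` primitive
containing an odd number of negative letters, and none otherwise. Equivalently, the number of `ρ` is
`1 - ε w` if the quotient of `n` by the period of `w` is a power of `2`, and `0` otherwise, where
`ε w` is the sign of half a turn (`0` if `w` is not invariant under it). That indicator is the sum of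
the Möbius function over the odd divisors of the quotient: this is where the odd divisors of `n` come
from.
-/

section CyclicLeftPeaks

open Equiv Finset Function

/-! ### Left enriched partitions -/

section SignedOrder

/-- The comparison of labels behind a letter of sign `(-1) ^ a`: a negative sign reverses it. -/
def SignedLT {β : Type*} [LT β] (a : ℕ) (r s : β) : Prop :=
  if Even a then r < s else s < r

/-- The comparison of two signed letters, ties being broken by labels `r` and `s`. The natural
number `2 * j` encodes the letter `j` and `2 * j - 1` the letter `-j`, so that `<` on `ℕ` is
Petersen's order `0 < -1 < 1 < -2 < 2 < ⋯`; a tie between negative letters reverses the labels. -/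
def SignedLexLT {β : Type*} [LT β] (a b : ℕ) (r s : β) : Prop :=
  a < b ∨ a = b ∧ SignedLT a r s

theorem signedLT_iff_mul_lt_mul {R : Type*} [Ring R] [LinearOrder R] [IsStrictOrderedRing R]
    {a : ℕ} {r s : R} : SignedLT a r s ↔ (-1) ^ a * r < (-1) ^ a * s := by
  rcases Nat.even_or_odd a with ha | ha
  · simp [SignedLT, ha, ha.neg_one_pow]
  · simp [SignedLT, Nat.not_even_iff_odd.2 ha, ha.neg_one_pow]

theorem SignedLT.imp {β γ : Type*} [LT β] [LT γ] {a : ℕ} {r s : β} {t u : γ} (h : SignedLT a r s)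
    (hlt : r < s → t < u) (hgt : s < r → u < t) : SignedLT a t u := by
  unfold SignedLT at h ⊢
  split_ifs at h ⊢
  exacts [hlt h, hgt h]

theorem SignedLT.lt_of_lt {β γ : Type*} [Preorder β] [LT γ] {a : ℕ} {r s : β} {t u : γ}
    (h : SignedLT a r s) (h' : SignedLT a t u) (hrs : r < s) : t < u := by
  unfold SignedLT at h h'
  split_ifs at h h'
  exacts [h', absurd hrs h.asymm]

theorem SignedLT.gt_of_gt {β γ : Type*} [Preorder β] [LT γ] {a : ℕ} {r s : β} {t u : γ}
    (h : SignedLT a r s) (h' : SignedLT a t u) (hrs : s < r) : u < t := by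
  unfold SignedLT at h h'
  split_ifs at h h'
  exacts [absurd hrs h.asymm, h']

theorem SignedLT.add {β : Type*} [LT β] {a b : ℕ} {r s t u : β} (h : SignedLT a r s)
    (hlt : r < s → SignedLT b t u) (hgt : s < r → SignedLT b u t) : SignedLT (a + b) t u := by
  by_cases ha : Even a <;> by_cases hb : Even b <;>
    simp only [SignedLT, Nat.even_add, ha, hb, if_true, if_false] at * <;> tauto

theorem SignedLexLT.signedLT {β : Type*} [LT β] {a b : ℕ} {r s : β} (h : SignedLexLT a b r s)
    (hab : a = b) : SignedLT a r s :=
  (h.resolve_left hab.not_lt).2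

theorem signedLexLT_iff_toLex_lt {R : Type*} [Ring R] [LinearOrder R] [IsStrictOrderedRing R]
    {a b : ℕ} {r s : R} :
    SignedLexLT a b r s ↔ toLex (a, (-1) ^ a * r) < toLex (b, (-1) ^ b * s) := by
  rw [Prod.Lex.toLex_lt_toLex]
  refine or_congr_right (and_congr_right ?_)
  rintro rfl
  exact signedLT_iff_mul_lt_mul

theorem signedLexLT_intCast_iff {n a b : ℕ} {r s : Fin n} :
    SignedLexLT a b ((r : ℕ) : ℤ) ((s : ℕ) : ℤ) ↔ SignedLexLT a b r s := by
  simp [SignedLexLT, SignedLT]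

end SignedOrder

section LeftEnriched

variable {n : ℕ}

/-- The words of length `n` over the alphabet `{0, …, N - 1}`. -/
def words (n N : ℕ) : Finset (Fin n → ℕ) :=
  Fintype.piFinset fun _ => range N

theorem mem_words {N : ℕ} {f : Fin n → ℕ} : f ∈ words n N ↔ ∀ x, f x < N := by
  simp [words]

theorem card_words (n N : ℕ) : #(words n N) = N ^ n := by
  simp [words]

/-- Petersen's left enriched `π`-partitions, with signed letters encoded as in `SignedLexLT`. -/
def IsLeftEnriched (π : Perm (Fin n)) (f : Fin n → ℕ) : Prop :=
  ∀ x y, x < y → SignedLexLT (f x) (f y) (π x) (π y)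

/-- The number of left enriched `π`-partitions with letters among the first `N`; as a function of
`N`, Petersen's left enriched order polynomial. -/
def leftEnrichedCount (π : Perm (Fin n)) (N : ℕ) : ℕ :=
  #{f ∈ words n N | IsLeftEnriched π f}

theorem isLeftEnriched_comp_inv (π ρ : Perm (Fin n)) (w : Fin n → ℕ) :
    IsLeftEnriched π (w ∘ ⇑ρ⁻¹) ↔
      ∀ x y, ρ x < ρ y → SignedLexLT (w x) (w y) (π (ρ x)) (π (ρ y)) := by
  refine ⟨fun h x y hxy => by simpa using h _ _ hxy, fun h x y hxy => ?_⟩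
  simpa using h (ρ⁻¹ x) (ρ⁻¹ y) (by simpa using hxy)

theorem leftEnrichedCount_eq_card (π ρ : Perm (Fin n)) (N : ℕ) :
    leftEnrichedCount π N =
      #{w ∈ words n N | ∀ x y, ρ x < ρ y → SignedLexLT (w x) (w y) (π (ρ x)) (π (ρ y))} := by
  refine card_nbij' (· ∘ ρ) (· ∘ ⇑ρ⁻¹) ?_ ?_ ?_ ?_
  · intro f hf
    simp only [coe_filter, mem_words, Set.mem_ofPred_eq] at hf ⊢
    refine ⟨fun x => hf.1 _, (isLeftEnriched_comp_inv π ρ _).1 ?_⟩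
    simpa [Function.comp_assoc] using hf.2
  · intro w hw
    simp only [coe_filter, mem_words, Set.mem_ofPred_eq] at hw ⊢
    exact ⟨fun x => hw.1 _, (isLeftEnriched_comp_inv π ρ w).2 hw.2⟩
  · intro f _
    simp [Function.comp_assoc]
  · intro w _
    simp [Function.comp_assoc]

theorem existsUnique_perm_lt_imp_lt {γ : Type*} [LinearOrder γ] {K : Fin n → γ}
    (hK : Injective K) : ∃! ρ : Perm (Fin n), ∀ x y, ρ x < ρ y → K x < K y := by
  have strictMono_iff (ρ : Perm (Fin n)) :
      (∀ x y, ρ x < ρ y → K x < K y) ↔ StrictMono (K ∘ ⇑ρ⁻¹) :=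
    ⟨fun h x y hxy => h _ _ (by simpa using hxy), fun h x y hxy => by simpa using h hxy⟩
  simp only [strictMono_iff]
  refine ⟨(Tuple.sort K)⁻¹, ?_, fun ρ hρ => ?_⟩
  · simpa using (Tuple.monotone_sort K).strictMono_of_injective (hK.comp (Equiv.injective _))
  · have key := Tuple.unique_monotone hρ.monotone (Tuple.monotone_sort K)
    exact inv_eq_iff_eq_inv.1 (Equiv.ext fun x => hK (congrFun key x))

theorem perm_eq_of_lt_imp_lt {ρ σ : Perm (Fin n)} (h : ∀ x y, ρ x < ρ y → σ x < σ y) : ρ = σ :=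
  (existsUnique_perm_lt_imp_lt σ.injective).unique h fun _ _ => id

theorem card_perm_signedLexLT (w : Fin n → ℕ) :
    #{ρ : Perm (Fin n) | ∀ x y, ρ x < ρ y → SignedLexLT (w x) (w y) x y} = 1 := by
  let K : Fin n → ℕ ×ₗ ℤ := fun x => toLex (w x, (-1) ^ w x * (x : ℤ))
  have hK : Injective K := fun x y h => by
    obtain ⟨hw, hxy⟩ := Prod.ext_iff.1 (toLex.injective h)
    simp only at hw hxy
    rw [hw] at hxy
    exact Fin.ext (by exact_mod_cast mul_left_cancel₀ (pow_ne_zero _ (by norm_num)) hxy)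
  rw [card_eq_one, singleton_iff_unique_mem]
  simp only [mem_filter, mem_univ, true_and, ← signedLexLT_intCast_iff, signedLexLT_iff_toLex_lt]
  exact existsUnique_perm_lt_imp_lt hK

theorem sum_leftEnrichedCount (n N : ℕ) :
    ∑ π : Perm (Fin n), leftEnrichedCount π N = N ^ n := by
  calc ∑ π : Perm (Fin n), leftEnrichedCount π N
      = ∑ ρ : Perm (Fin n), leftEnrichedCount ρ⁻¹ N := (sum_equiv (Equiv.inv _) (by simp) (by simp))
    _ = ∑ ρ : Perm (Fin n), #{w ∈ words n N | ∀ x y, ρ x < ρ y → SignedLexLT (w x) (w y) x y} :=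
        sum_congr rfl fun ρ _ => by simp [leftEnrichedCount_eq_card ρ⁻¹ ρ]
    _ = ∑ w ∈ words n N, #{ρ : Perm (Fin n) | ∀ x y, ρ x < ρ y → SignedLexLT (w x) (w y) x y} :=
        sum_card_bipartiteAbove_eq_sum_card_bipartiteBelow _
    _ = N ^ n := by simp [card_perm_signedLexLT, card_words]

end LeftEnriched

/-! ### Conjugates of the cycle -/

section Conjugation

variable {G : Type*} [Group G] [Fintype G]

theorem card_conj_eq_card_centralizer {g π : G} (h : IsConj g π) :
    #{ρ | ρ * g * ρ⁻¹ = π} = Nat.card (Subgroup.centralizer {g}) := by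
  obtain ⟨c, rfl⟩ := isConj_iff.1 h
  rw [← Fintype.card_subtype, ← Nat.card_eq_fintype_card]
  refine Nat.card_congr ((Equiv.mulLeft c⁻¹).subtypeEquiv fun ρ => ?_)
  rw [Subgroup.mem_centralizer_singleton_iff, mul_inv_eq_iff_eq_mul, Equiv.coe_mulLeft,
    mul_assoc c⁻¹, inv_mul_eq_iff_eq_mul]
  group

theorem sum_conj_eq_card_centralizer_nsmul {M : Type*} [AddCommMonoid M] (g : G)
    [DecidablePred (IsConj g)] (F : G → M) :
    ∑ ρ, F (ρ * g * ρ⁻¹) = Nat.card (Subgroup.centralizer {g}) • ∑ π with IsConj g π, F π := by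
  have maps (ρ : G) (_ : ρ ∈ univ) : ρ * g * ρ⁻¹ ∈ ({π | IsConj g π} : Finset G) := by
    simp [isConj_iff]
  rw [← sum_fiberwise_of_maps_to' maps, smul_sum]
  refine sum_congr rfl fun π hπ => ?_
  rw [sum_const, card_conj_eq_card_centralizer (mem_filter.1 hπ).2]

end Conjugation

section CyclicSet

variable {n : ℕ}

theorem cyclicSet_eq_filter_isConj (hn : 2 ≤ n) :
    cyclicSet n = ({π | IsConj (finRotate n) π} : Finset (Perm (Fin n))) := by
  ext π
  rw [cyclicSet, mem_filter_univ, mem_filter_univ, IsCyclicPerm, fullCycleType,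
    Perm.isConj_iff_cycleType_eq, cycleType_finRotate_of_le hn]
  have hs := Perm.sum_cycleType π
  constructor <;> intro h
  · have h0 : n - #π.support = 0 := by
      by_contra h0
      have h1 : 1 ∈ ({n} : Multiset ℕ) := by
        rw [← h]
        exact Multiset.mem_add.2 (Or.inr (Multiset.mem_replicate.2 ⟨h0, rfl⟩))
      exact absurd (Multiset.mem_singleton.1 h1) (by omega)
    simpa [h0] using h.symm
  · rw [← h, Multiset.sum_singleton] at hs
    simp [← h, ← hs]

theorem card_centralizer_finRotate (hn : 2 ≤ n) :
    Nat.card (Subgroup.centralizer {finRotate n}) = n := by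
  rw [Perm.nat_card_centralizer, cycleType_finRotate_of_le hn]
  simp

end CyclicSet

/-! ### Rankings consistent with a word -/

section Consistent

variable {α β γ : Type*}

/-- `R` ranks the points of `α` consistently with the letters `w` along the dynamics `T`: the order
of two points is that of their letters, ties being broken, with the sign of the common letter, by
the ranks of the images under `T`. -/
def IsConsistent [LT β] (T : α → α) (w : α → ℕ) (R : α → β) : Prop :=
  ∀ x y, R x < R y → SignedLexLT (w x) (w y) (R (T x)) (R (T y))

variable {T : α → α} {w : α → ℕ}

theorem birkhoffSum_congr {x y : α} {l : ℕ} (h : ∀ k < l, w (T^[k] x) = w (T^[k] y)) :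
    birkhoffSum T w l x = birkhoffSum T w l y :=
  sum_congr rfl fun k hk => h k (mem_range.1 hk)

theorem IsConsistent.signedLT_iterate [LT β] {R : α → β} (hR : IsConsistent T w R) {x y : α}
    {l : ℕ} (h : ∀ k < l, w (T^[k] x) = w (T^[k] y)) (hxy : R x < R y) :
    SignedLT (birkhoffSum T w l x) (R (T^[l] x)) (R (T^[l] y)) := by
  induction l with
  | zero => simpa [SignedLT] using hxy
  | succ l ih =>
    have hl : w (T^[l] x) = w (T^[l] y) := h l l.lt_succ_self
    rw [birkhoffSum_succ, iterate_succ_apply', iterate_succ_apply']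
    refine (ih fun k hk => h k (hk.trans l.lt_succ_self)).add
      (fun hlt => (hR _ _ hlt).signedLT hl) fun hgt => ?_
    rw [hl]
    exact (hR _ _ hgt).signedLT hl.symm

theorem IsConsistent.of_lt_imp_lt [LinearOrder β] [Preorder γ] {K : α → γ} {R : α → β}
    (hK : IsConsistent T w K) (hR : Injective R) (h : ∀ x y, R x < R y → K x < K y) :
    IsConsistent T w R := by
  have lt_of_lt {x y : α} (hxy : K x < K y) : R x < R y := by
    rcases lt_trichotomy (R x) (R y) with hlt | heq | hgt
    · exact hlt
    · exact absurd (hR heq ▸ hxy) (lt_irrefl _)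
    · exact absurd (h _ _ hgt) hxy.asymm
  refine fun x y hxy => (hK x y (h x y hxy)).imp_right (And.imp_right fun hT => ?_)
  exact hT.imp lt_of_lt lt_of_lt

/-- The signed itinerary of a point: the letters met along its orbit, each carrying the sign of the
product of the letters before it. -/
def itinerary (T : α → α) (w : α → ℕ) (x : α) (l : ℕ) : ℤ :=
  (-1) ^ birkhoffSum T w l x * w (T^[l] x)

theorem itinerary_zero (x : α) : itinerary T w x 0 = w x := by
  simp [itinerary]

theorem itinerary_succ (x : α) (l : ℕ) :
    itinerary T w x (l + 1) = (-1) ^ w x * itinerary T w (T x) l := by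
  simp [itinerary, birkhoffSum_succ', pow_add, mul_assoc]

theorem itinerary_eq_iff_of_forall_lt {x y : α} {l : ℕ}
    (h : ∀ k < l, w (T^[k] x) = w (T^[k] y)) :
    itinerary T w x l = itinerary T w y l ↔ w (T^[l] x) = w (T^[l] y) := by
  rw [itinerary, itinerary, birkhoffSum_congr h, mul_right_inj' (by simp), Nat.cast_inj]

theorem itinerary_eq_iff {x y : α} :
    itinerary T w x = itinerary T w y ↔ ∀ l, w (T^[l] x) = w (T^[l] y) := by
  refine ⟨fun h l => ?_, fun h => funext fun l => (itinerary_eq_iff_of_forall_lt fun k _ => h k).2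
    (h l)⟩
  induction l using Nat.strong_induction_on with
  | _ l ih => exact (itinerary_eq_iff_of_forall_lt ih).1 (congrFun h l)

theorem IsConsistent.itinerary_lt [LT β] {R : α → β} (hR : IsConsistent T w R) {x y : α}
    (hne : itinerary T w x ≠ itinerary T w y) (hxy : R x < R y) :
    toLex (itinerary T w x) < toLex (itinerary T w y) := by
  rw [Ne, itinerary_eq_iff, not_forall] at hne
  have first := Nat.find_spec hne
  have before (k : ℕ) (hk : k < Nat.find hne) : w (T^[k] x) = w (T^[k] y) :=
    not_not.1 (Nat.find_min hne hk)
  generalize Nat.find hne = l at first before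
  refine ⟨l, fun k hk => (itinerary_eq_iff_of_forall_lt fun j hj => before j (hj.trans hk)).2
    (before k hk), ?_⟩
  simp only [Pi.toLex_apply, itinerary, ← birkhoffSum_congr before]
  refine signedLT_iff_mul_lt_mul.1 ((hR.signedLT_iterate before hxy).imp (fun hlt => ?_)
    fun hgt => ?_)
  · exact_mod_cast (hR _ _ hlt).resolve_right fun h => first h.1
  · exact_mod_cast (hR _ _ hgt).resolve_right fun h => first h.1.symm

theorem isConsistent_itinerary {τ : α → ℤ} (hτ : ∀ x, τ x = (-1) ^ w x * τ (T x)) :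
    IsConsistent T w fun x => toLex (toLex (itinerary T w x), τ x) := by
  intro x y hxy
  simp only [Prod.Lex.toLex_lt_toLex, toLex_inj] at hxy
  rcases hxy with ⟨l, before, hl⟩ | ⟨hit, hlt⟩
  · simp only [Pi.toLex_apply] at before hl
    rcases l with _ | l
    · exact Or.inl (by simpa [itinerary_zero] using hl)
    have hw : w x = w y := by simpa [itinerary_zero] using before 0 l.succ_pos
    have tail (k : ℕ) (hk : k < l) : itinerary T w (T x) k = itinerary T w (T y) k := by
      simpa [itinerary_succ, hw] using before (k + 1) (Nat.succ_lt_succ hk)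
    rw [itinerary_succ, itinerary_succ, ← hw, ← signedLT_iff_mul_lt_mul] at hl
    exact Or.inr ⟨hw, hl.imp
      (fun h => Prod.Lex.toLex_lt_toLex.2 (Or.inl ⟨l, tail, h⟩))
      fun h => Prod.Lex.toLex_lt_toLex.2 (Or.inl ⟨l, fun k hk => (tail k hk).symm, h⟩)⟩
  · have hw : w x = w y := itinerary_eq_iff.1 hit 0
    have tail : itinerary T w (T x) = itinerary T w (T y) :=
      itinerary_eq_iff.2 fun l => itinerary_eq_iff.1 hit (l + 1)
    rw [hτ x, hτ y, ← hw, ← signedLT_iff_mul_lt_mul] at hlt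
    exact Or.inr ⟨hw, hlt.imp
      (fun h => Prod.Lex.toLex_lt_toLex.2 (Or.inr ⟨by rw [tail], h⟩))
      fun h => Prod.Lex.toLex_lt_toLex.2 (Or.inr ⟨by rw [tail], h⟩)⟩

end Consistent

section PeriodicLetters

variable {α β : Type*} {T : α → α} {w : α → ℕ} {q : ℕ}

theorem apply_iterate_iterate_of_comp_iterate_eq (hq : w ∘ T^[q] = w) (l : ℕ) (x : α) :
    w (T^[l] (T^[q] x)) = w (T^[l] x) := by
  rw [← iterate_add_apply, add_comm, iterate_add_apply]
  exact congrFun hq _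

theorem birkhoffSum_iterate_of_comp_iterate_eq (hq : w ∘ T^[q] = w) (k : ℕ) (x : α) :
    birkhoffSum T w q (T^[k] x) = birkhoffSum T w q x := by
  induction k with
  | zero => rfl
  | succ k ih =>
    have h := birkhoffSum_succ' T w q (T^[k] x)
    rw [birkhoffSum_succ, show w (T^[q] (T^[k] x)) = w (T^[k] x) from congrFun hq _, add_comm] at h
    rw [iterate_succ_apply', ← ih, Nat.add_left_cancel h]

theorem birkhoffSum_mul_of_comp_iterate_eq (hq : w ∘ T^[q] = w) (d : ℕ) (x : α) :
    birkhoffSum T w (d * q) x = d * birkhoffSum T w q x := by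
  induction d with
  | zero => simp
  | succ d ih =>
    rw [Nat.succ_mul, birkhoffSum_add, ih, birkhoffSum_iterate_of_comp_iterate_eq hq, Nat.succ_mul]

theorem IsConsistent.comp_iterate [LT β] {R : α → β} (hR : IsConsistent T w R)
    (hq : w ∘ T^[q] = w) : IsConsistent T w (R ∘ T^[q]) := by
  intro x y hxy
  have letters (z : α) : w (T^[q] z) = w z := congrFun hq z
  have h := hR _ _ hxy
  rwa [letters, letters, ← iterate_succ_apply' T q, ← iterate_succ_apply' T q] at h

theorem not_apply_zero_lt_apply_one [Preorder β] {u : ℕ → β}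
    (step : ∀ j, u j < u (j + 1) → u (j + 1) < u (j + 2)) {m : ℕ} (hm : 0 < m) (hu : u m = u 0) :
    ¬ u 0 < u 1 := fun h01 => by
  have hmono : StrictMono u := strictMono_nat_of_lt_succ fun j => by
    induction j with
    | zero => exact h01
    | succ j ih => exact step j ih
  exact (hmono hm).ne' hu

theorem IsConsistent.apply_iterate_eq [LinearOrder β] {R : α → β} (hR : IsConsistent T w R)
    (hq : w ∘ T^[q] = w) {x : α} (hx : x ∈ periodicPts T) (heven : Even (birkhoffSum T w q x)) :
    R (T^[q] x) = R x := by
  obtain ⟨m, hm, hmx⟩ := hx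
  let u : ℕ → β := fun j => R ((T^[q])^[j] x)
  have hu : u m = u 0 := congrArg R (hmx.iterate q)
  have letters (j k : ℕ) : w (T^[k] ((T^[q])^[j] x)) = w (T^[k] x) := by
    induction j with
    | zero => rfl
    | succ j ih => rw [iterate_succ_apply', apply_iterate_iterate_of_comp_iterate_eq hq, ih]
  have step (i j : ℕ) (h : u i < u j) : u (i + 1) < u (j + 1) := by
    have hlt := hR.signedLT_iterate (l := q) (fun k _ => (letters i k).trans (letters j k).symm) h
    rw [birkhoffSum_congr fun k _ => letters i k] at hlt
    simpa only [u, iterate_succ_apply', SignedLT, if_pos heven] using hlt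
  exact le_antisymm (not_lt.1 (not_apply_zero_lt_apply_one (fun j => step j (j + 1)) hm hu))
    (not_lt.1 (not_apply_zero_lt_apply_one (β := βᵒᵈ) (fun j => step (j + 1) j) hm hu))

end PeriodicLetters

section Cycle

variable {n : ℕ} {T : Perm (Fin n)} {w : Fin n → ℕ}

theorem iterate_apply_eq_self_iff_of_isCycleOn (hT : T.IsCycleOn Set.univ) {q : ℕ} {x : Fin n} :
    T^[q] x = x ↔ n ∣ q := by
  rw [← coe_univ] at hT
  rw [← Perm.coe_pow, hT.pow_apply_eq (mem_univ x), card_univ, Fintype.card_fin]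

theorem exists_iterate_eq_of_isCycleOn (hT : T.IsCycleOn Set.univ) (x y : Fin n) :
    ∃ k < n, T^[k] x = y := by
  rw [← coe_univ] at hT
  simpa [← Perm.coe_pow] using hT.exists_pow_eq (mem_univ x) (mem_univ y)

theorem exists_orbit_index (hT : T.IsCycleOn Set.univ) (x : Fin n) :
    ∃ k : Fin n → ℕ, (∀ y, T^[k y] x = y) ∧ ∀ l, k (T^[l] x) ≡ l [MOD n] := by
  choose k _ hk using exists_iterate_eq_of_isCycleOn hT x
  refine ⟨k, hk, fun l => ?_⟩
  have h := hk (T^[l] x)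
  rw [← coe_univ] at hT
  rwa [← Perm.coe_pow, ← Perm.coe_pow, hT.pow_apply_eq_pow_apply (mem_univ x), card_univ,
    Fintype.card_fin] at h

theorem itinerary_eq_iff_comp_iterate_eq (hT : T.IsCycleOn Set.univ) {q : ℕ} {x : Fin n} :
    itinerary T w (T^[q] x) = itinerary T w x ↔ w ∘ T^[q] = w := by
  refine ⟨fun h => funext fun y => ?_, fun h => itinerary_eq_iff.2 fun l =>
    apply_iterate_iterate_of_comp_iterate_eq h l x⟩
  obtain ⟨k, -, rfl⟩ := exists_iterate_eq_of_isCycleOn hT x y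
  rw [comp_apply, ← itinerary_eq_iff.1 h k, ← iterate_add_apply, ← iterate_add_apply, add_comm]

/-- The length of the shortest period of the letters along the dynamics `T`. -/
def wordPeriod (T : Perm (Fin n)) (w : Fin n → ℕ) : ℕ :=
  minimalPeriod (fun v : Fin n → ℕ => v ∘ T) w

theorem comp_iterate_eq_self_iff {q : ℕ} : w ∘ T^[q] = w ↔ wordPeriod T w ∣ q := by
  have iterate_eq (q : ℕ) : (fun v : Fin n → ℕ => v ∘ T)^[q] w = w ∘ T^[q] := by
    induction q with
    | zero => rfl
    | succ q ih => rw [iterate_succ_apply', ih, iterate_succ, comp_assoc]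
  rw [wordPeriod, ← isPeriodicPt_iff_minimalPeriod_dvd, IsPeriodicPt, IsFixedPt, iterate_eq]

theorem wordPeriod_dvd (hT : T.IsCycleOn Set.univ) : wordPeriod T w ∣ n :=
  comp_iterate_eq_self_iff.1 <| funext fun _ =>
    congrArg w ((iterate_apply_eq_self_iff_of_isCycleOn hT).2 dvd_rfl)

theorem IsConsistent.dvd_of_even_birkhoffSum (hT : T.IsCycleOn Set.univ) {ρ : Perm (Fin n)}
    (hρ : IsConsistent T w ρ) {q : ℕ} (hq : w ∘ T^[q] = w) {x : Fin n}
    (heven : Even (birkhoffSum T w q x)) : n ∣ q := by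
  refine (iterate_apply_eq_self_iff_of_isCycleOn hT).1
    (ρ.injective (hρ.apply_iterate_eq hq ⟨n, x.pos, ?_⟩ heven))
  exact (iterate_apply_eq_self_iff_of_isCycleOn hT).2 dvd_rfl

theorem card_isConsistent_of_injective {T : Fin n → Fin n} (h : Injective (itinerary T w)) :
    #{ρ : Perm (Fin n) | IsConsistent T w ρ} = 1 := by
  have isConsistent_iff (ρ : Perm (Fin n)) : IsConsistent T w ρ ↔
      ∀ x y, ρ x < ρ y → toLex (itinerary T w x) < toLex (itinerary T w y) := by
    refine ⟨fun hρ x y hxy => hρ.itinerary_lt (fun he => hxy.ne (congrArg ρ (h he))) hxy,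
      fun hρ => ?_⟩
    refine (isConsistent_itinerary (τ := 0) (by simp)).of_lt_imp_lt ρ.injective fun x y hxy => ?_
    exact Prod.Lex.toLex_lt_toLex.2 (Or.inl (hρ x y hxy))
  rw [card_eq_one, singleton_iff_unique_mem]
  simp only [mem_filter, mem_univ, true_and, isConsistent_iff]
  exact existsUnique_perm_lt_imp_lt (toLex.injective.comp h)

theorem exists_isConsistent {T : Fin n → Fin n} {τ : Fin n → ℤ}
    (hτ : ∀ x, τ x = (-1) ^ w x * τ (T x)) (h : Injective fun x => (itinerary T w x, τ x)) :
    ∃ ρ : Perm (Fin n), IsConsistent T w ρ := by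
  have hK : Injective fun x => toLex (toLex (itinerary T w x), τ x) := h
  obtain ⟨ρ, hρ, -⟩ := existsUnique_perm_lt_imp_lt hK
  exact ⟨ρ, (isConsistent_itinerary hτ).of_lt_imp_lt ρ.injective hρ⟩

theorem exists_sign_cocycle (hT : T.IsCycleOn Set.univ) {x : Fin n}
    (heven : Even (birkhoffSum T w n x)) :
    ∃ τ : Fin n → ℤ, ∀ l, τ (T^[l] x) = (-1) ^ birkhoffSum T w l x := by
  let s : ℕ → ℤ := fun l => (-1) ^ birkhoffSum T w l x
  have hs : Periodic s n := fun l => by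
    simp only [s, add_comm l, birkhoffSum_add, pow_add, heven.neg_one_pow, one_mul,
      (iterate_apply_eq_self_iff_of_isCycleOn hT).2 dvd_rfl]
  obtain ⟨k, -, hk⟩ := exists_orbit_index hT x
  refine ⟨fun y => s (k y), fun l => ?_⟩
  calc s (k (T^[l] x)) = s (k (T^[l] x) % n) := (hs.map_mod_nat _).symm
    _ = s l := by rw [hk, hs.map_mod_nat]

theorem eq_or_eq_iterate_of_itinerary_eq (hT : T.IsCycleOn Set.univ)
    (hn : n = 2 * wordPeriod T w) {x y : Fin n} (h : itinerary T w y = itinerary T w x) :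
    y = x ∨ y = T^[wordPeriod T w] x := by
  obtain ⟨k, hk, rfl⟩ := exists_iterate_eq_of_isCycleOn hT x y
  obtain ⟨c, rfl⟩ :=
    comp_iterate_eq_self_iff.1 ((itinerary_eq_iff_comp_iterate_eq hT).1 h)
  have hc : c < 2 := by
    by_contra! hc
    have := Nat.mul_le_mul_left (wordPeriod T w) hc
    omega
  interval_cases c <;> simp

theorem IsConsistent.eq_of_lt_iff (hT : T.IsCycleOn Set.univ)
    (hn : n = 2 * wordPeriod T w) {ρ σ : Perm (Fin n)} (hρ : IsConsistent T w ρ)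
    (hσ : IsConsistent T w σ) {x : Fin n}
    (h : ρ x < ρ (T^[wordPeriod T w] x) ↔ σ x < σ (T^[wordPeriod T w] x)) : ρ = σ := by
  refine perm_eq_of_lt_imp_lt fun y z hyz => ?_
  by_cases hit : itinerary T w z = itinerary T w y
  · obtain rfl : z = T^[wordPeriod T w] y :=
      (eq_or_eq_iterate_of_itinerary_eq hT hn hit).resolve_left fun h => hyz.ne (congrArg ρ h.symm)
    obtain ⟨l, -, rfl⟩ := exists_iterate_eq_of_isCycleOn hT x y
    rw [← iterate_add_apply, add_comm, iterate_add_apply] at hyz ⊢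
    have letters (k : ℕ) : w (T^[k] (T^[wordPeriod T w] x)) = w (T^[k] x) :=
      apply_iterate_iterate_of_comp_iterate_eq (comp_iterate_eq_self_iff.2 dvd_rfl) k x
    have hne : x ≠ T^[wordPeriod T w] x := fun h => hyz.ne (by rw [← h])
    by_cases hlt : ρ x < ρ (T^[wordPeriod T w] x)
    · have hρlt := hρ.signedLT_iterate (l := l) (fun k _ => (letters k).symm) hlt
      have hσlt := hσ.signedLT_iterate (l := l) (fun k _ => (letters k).symm) (h.1 hlt)
      exact hρlt.lt_of_lt hσlt hyz
    · have hρgt := hρ.signedLT_iterate (l := l) (fun k _ => letters k)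
        ((not_lt.1 hlt).lt_of_ne (ρ.injective.ne hne.symm))
      have hσgt := hσ.signedLT_iterate (l := l) (fun k _ => letters k)
        ((not_lt.1 (h.not.1 hlt)).lt_of_ne (σ.injective.ne hne.symm))
      exact hρgt.gt_of_gt hσgt hyz
  · have hlt := hρ.itinerary_lt (Ne.symm hit) hyz
    by_contra hσyz
    have hne : y ≠ z := fun h => hyz.ne (congrArg ρ h)
    exact hlt.asymm (hσ.itinerary_lt hit ((not_lt.1 hσyz).lt_of_ne (σ.injective.ne hne.symm)))

theorem exists_isConsistent_of_odd (hT : T.IsCycleOn Set.univ) (hn : n = 2 * wordPeriod T w)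
    {x : Fin n} (hodd : Odd (birkhoffSum T w (wordPeriod T w) x)) :
    ∃ ρ : Perm (Fin n), IsConsistent T w ρ := by
  have hw : w ∘ T^[wordPeriod T w] = w := comp_iterate_eq_self_iff.2 dvd_rfl
  have heven : Even (birkhoffSum T w n x) := by
    conv => enter [1, 3]; rw [hn]
    rw [birkhoffSum_mul_of_comp_iterate_eq hw]
    exact even_two_mul _
  obtain ⟨τ, hτ⟩ := exists_sign_cocycle hT heven
  refine exists_isConsistent (τ := τ) (fun y => ?_) fun y z hyz => ?_
  · obtain ⟨l, -, rfl⟩ := exists_iterate_eq_of_isCycleOn hT x y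
    rw [← iterate_succ_apply' T l x, hτ, hτ, birkhoffSum_succ, pow_add, mul_left_comm,
      ← pow_add, Even.neg_one_pow ⟨_, rfl⟩, mul_one]
  · obtain ⟨hit, hτyz⟩ := Prod.ext_iff.1 hyz
    refine (eq_or_eq_iterate_of_itinerary_eq hT hn hit).resolve_right fun hy => ?_
    obtain ⟨l, -, rfl⟩ := exists_iterate_eq_of_isCycleOn hT x z
    simp only [hy] at hτyz
    rw [← iterate_add_apply, hτ, hτ, add_comm, birkhoffSum_add, pow_add,
      birkhoffSum_iterate_of_comp_iterate_eq hw, hodd.neg_one_pow] at hτyz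
    have hpos : (-1 : ℤ) ^ birkhoffSum T w l x ≠ 0 := pow_ne_zero _ (by norm_num)
    exact hpos (by linarith)

theorem card_isConsistent_of_odd (hT : T.IsCycleOn Set.univ)
    (hn : n = 2 * wordPeriod T w) {x : Fin n} (hodd : Odd (birkhoffSum T w (wordPeriod T w) x)) :
    #{ρ : Perm (Fin n) | IsConsistent T w ρ} = 2 := by
  obtain ⟨ρ, hρ⟩ := exists_isConsistent_of_odd hT hn hodd
  set p := wordPeriod T w
  have htwice : T^[p] (T^[p] x) = x := by
    rw [← iterate_add_apply, ← two_mul, ← hn]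
    exact (iterate_apply_eq_self_iff_of_isCycleOn hT).2 dvd_rfl
  have hne : x ≠ T^[p] x := fun h => by
    have hdvd := (iterate_apply_eq_self_iff_of_isCycleOn hT).1 h.symm
    have hpos := x.pos
    have := Nat.le_of_dvd (by omega) hdvd
    omega
  have hσ : IsConsistent T w (ρ * T ^ p) := by
    rw [Perm.coe_mul, Perm.coe_pow]
    exact hρ.comp_iterate (comp_iterate_eq_self_iff.2 dvd_rfl)
  have hflip : (ρ * T ^ p) x < (ρ * T ^ p) (T^[p] x) ↔ ¬ ρ x < ρ (T^[p] x) := by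
    rw [Perm.mul_apply, Perm.mul_apply, Perm.coe_pow, htwice, not_lt,
      (ρ.injective.ne hne.symm).le_iff_lt]
  refine card_eq_two.2 ⟨ρ, ρ * T ^ p, fun h => ?_, ?_⟩
  · rw [← h] at hflip
    exact iff_not_self hflip
  · ext ρ'
    simp only [mem_filter, mem_univ, true_and, mem_insert, mem_singleton]
    refine ⟨fun hρ' => ?_, by rintro (rfl | rfl) <;> assumption⟩
    by_cases h : ρ' x < ρ' (T^[p] x) ↔ ρ x < ρ (T^[p] x)
    · exact Or.inl (hρ'.eq_of_lt_iff hT hn hρ h)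
    · exact Or.inr (hρ'.eq_of_lt_iff hT hn hσ (by rw [hflip]; tauto))

theorem card_isConsistent_eq_zero (hT : T.IsCycleOn Set.univ) (hn : n ≠ wordPeriod T w) {x : Fin n}
    (h : n = 2 * wordPeriod T w → Even (birkhoffSum T w (wordPeriod T w) x)) :
    #{ρ : Perm (Fin n) | IsConsistent T w ρ} = 0 := by
  have hperiod : w ∘ T^[wordPeriod T w] = w := comp_iterate_eq_self_iff.2 dvd_rfl
  have hdvd : wordPeriod T w ∣ n := wordPeriod_dvd hT
  rw [card_eq_zero, filter_eq_empty_iff]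
  intro ρ _ hρ
  have not_even : ¬ Even (birkhoffSum T w (wordPeriod T w) x) := fun heven =>
    hn (Nat.dvd_antisymm (hρ.dvd_of_even_birkhoffSum hT hperiod heven) hdvd)
  have hdvd_two : n ∣ 2 * wordPeriod T w :=
    hρ.dvd_of_even_birkhoffSum hT (comp_iterate_eq_self_iff.2 (Nat.dvd_mul_left _ _)) (x := x) <| by
      rw [birkhoffSum_mul_of_comp_iterate_eq hperiod]
      exact even_two_mul _
  refine not_even (h ?_)
  obtain ⟨e, he⟩ := hdvd
  have hp : 0 < wordPeriod T w := Nat.pos_of_mul_pos_right (he ▸ x.pos)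
  rw [mul_comm 2] at hdvd_two ⊢
  conv_lhs at hdvd_two => rw [he]
  have he2 := (Nat.dvd_prime Nat.prime_two).1 (Nat.dvd_of_mul_dvd_mul_left hp hdvd_two)
  rcases he2 with rfl | rfl
  · exact absurd (he.trans (mul_one _)) hn
  · exact he

/-- The sign `(-1) ^ (w x + w (T x) + ⋯ + w (T^[n / 2 - 1] x))` of half a turn if the letters are
periodic under half a turn, and `0` otherwise. -/
def halfTurnSign (T : Perm (Fin n)) (w : Fin n → ℕ) (x : Fin n) : ℤ :=
  if 2 ∣ n ∧ w ∘ T^[n / 2] = w then (-1) ^ birkhoffSum T w (n / 2) x else 0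

theorem halfTurnSign_of_odd {e : ℕ} (he : Odd e) (hn : n = wordPeriod T w * e) (x : Fin n) :
    halfTurnSign T w x = 0 := by
  refine if_neg fun ⟨h2, hhalf⟩ => ?_
  obtain ⟨c, hc⟩ := comp_iterate_eq_self_iff.1 hhalf
  have hp : 0 < wordPeriod T w := Nat.pos_of_mul_pos_right (hn ▸ x.pos)
  have h : wordPeriod T w * e = wordPeriod T w * (2 * c) := by
    rw [← hn, mul_left_comm, ← hc, Nat.mul_div_cancel' h2]
  rw [Nat.eq_of_mul_eq_mul_left hp h] at he
  exact Nat.not_odd_iff_even.2 (even_two_mul c) he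

theorem halfTurnSign_of_even {c : ℕ} (hn : n = wordPeriod T w * (2 * c)) (x : Fin n) :
    halfTurnSign T w x = ((-1) ^ birkhoffSum T w (wordPeriod T w) x) ^ c := by
  have hhalf : n / 2 = c * wordPeriod T w := by
    conv_lhs => rw [hn]
    rw [mul_left_comm, Nat.mul_div_cancel_left _ two_pos, mul_comm]
  have h2 : 2 ∣ n := ⟨wordPeriod T w * c, by conv_lhs => rw [hn, mul_left_comm]⟩
  rw [halfTurnSign, if_pos ⟨h2, comp_iterate_eq_self_iff.2 (hhalf ▸ Nat.dvd_mul_left _ _)⟩, hhalf,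
    birkhoffSum_mul_of_comp_iterate_eq (comp_iterate_eq_self_iff.2 dvd_rfl), mul_comm, pow_mul]

theorem injective_itinerary_of_wordPeriod_eq (hT : T.IsCycleOn Set.univ) (hn : n = wordPeriod T w) :
    Injective (itinerary T w) := fun x y h => by
  obtain ⟨k, hk, rfl⟩ := exists_iterate_eq_of_isCycleOn hT x y
  have hdvd := comp_iterate_eq_self_iff.1 ((itinerary_eq_iff_comp_iterate_eq hT).1 h.symm)
  rw [← hn] at hdvd
  rw [Nat.eq_zero_of_dvd_of_lt hdvd hk, iterate_zero_apply]

theorem card_isConsistent (hT : T.IsCycleOn Set.univ) (x : Fin n) :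
    (#{ρ : Perm (Fin n) | IsConsistent T w ρ} : ℤ) =
      (if ∃ j, n / wordPeriod T w = 2 ^ j then 1 else 0) * (1 - halfTurnSign T w x) := by
  obtain ⟨e, he⟩ : wordPeriod T w ∣ n := wordPeriod_dvd hT
  have hp : 0 < wordPeriod T w := Nat.pos_of_mul_pos_right (he ▸ x.pos)
  have he0 : 0 < e := Nat.pos_of_mul_pos_left (he ▸ x.pos)
  rw [show n / wordPeriod T w = e from Nat.div_eq_of_eq_mul_right hp he]
  obtain rfl | rfl | he3 : e = 1 ∨ e = 2 ∨ 2 < e := by omega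
  · rw [halfTurnSign_of_odd odd_one he, if_pos ⟨0, rfl⟩, card_isConsistent_of_injective
      (injective_itinerary_of_wordPeriod_eq hT (he.trans (mul_one _)))]
    norm_num
  · rw [halfTurnSign_of_even (c := 1) he, if_pos ⟨1, rfl⟩]
    rcases Nat.even_or_odd (birkhoffSum T w (wordPeriod T w) x) with heven | hodd
    · rw [card_isConsistent_eq_zero hT (by omega) fun _ => heven, heven.neg_one_pow]
      norm_num
    · rw [card_isConsistent_of_odd hT (by omega) hodd, hodd.neg_one_pow]
      norm_num
  · have hlt : wordPeriod T w * 2 < wordPeriod T w * e := Nat.mul_lt_mul_of_pos_left he3 hp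
    rw [card_isConsistent_eq_zero (x := x) hT (by omega) fun _ => by omega]
    split_ifs with hpow
    · obtain ⟨j, rfl⟩ := hpow
      obtain ⟨i, rfl⟩ : ∃ i, j = i + 2 := Nat.exists_eq_add_of_le' <|
        (Nat.pow_lt_pow_iff_right one_lt_two).1 (he3.trans_le' (by norm_num : 2 ^ 1 ≤ 2))
      have hc : Even (2 ^ (i + 1)) := ⟨2 ^ i, by ring⟩
      rw [halfTurnSign_of_even (c := 2 ^ (i + 1)) (he.trans (by ring)), ← pow_mul,
        (hc.mul_left _).neg_one_pow]
      norm_num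
    · norm_num

end Cycle

/-! ### Counting over all words -/

section CountingWords

variable {n : ℕ} {T : Perm (Fin n)}

theorem sum_periodic_words (hT : T.IsCycleOn Set.univ) {R : Type*} [CommSemiring R] (F : ℕ → R)
    (N : ℕ) {q : ℕ} (hq : q ∣ n) (x : Fin n) :
    ∑ w ∈ words n N with w ∘ T^[q] = w, ∏ l ∈ range q, F (w (T^[l] x)) =
      (∑ a ∈ range N, F a) ^ q := by
  have hq0 : 0 < q := Nat.pos_of_dvd_of_pos hq x.pos
  obtain ⟨k, hkx, hk⟩ := exists_orbit_index hT x
  have hsum : (∑ a ∈ range N, F a) ^ q = ∑ v ∈ words q N, ∏ l : Fin q, F (v l) := by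
    rw [words, ← prod_univ_sum, prod_const, card_univ, Fintype.card_fin]
  rw [hsum]
  refine sum_nbij' (fun w l => w (T^[l] x)) (fun v y => v ⟨k y % q, Nat.mod_lt _ hq0⟩)
    ?_ ?_ ?_ ?_ ?_
  · exact fun w hw => mem_words.2 fun l => mem_words.1 (mem_filter.1 hw).1 _
  · refine fun v hv => mem_filter.2 ⟨mem_words.2 fun y => mem_words.1 hv _, funext fun y => ?_⟩
    have hmod : k (T^[q] y) ≡ k y [MOD q] := by
      have h := (hk (q + k y)).of_dvd hq
      rw [iterate_add_apply, hkx] at h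
      exact h.trans (Nat.add_modEq_left)
    exact congrArg v (Fin.ext hmod)
  · intro w hw
    have hperiodic : Periodic (fun l => w (T^[l] x)) q := fun l => by
      simp only [iterate_add_apply]
      exact apply_iterate_iterate_of_comp_iterate_eq (mem_filter.1 hw).2 l x
    exact funext fun y => (hperiodic.map_mod_nat (k y)).trans (congrArg w (hkx y))
  · intro v _
    refine funext fun l => congrArg v (Fin.ext ?_)
    exact Eq.trans ((hk l).of_dvd hq) (Nat.mod_eq_of_lt l.2)
  · exact fun w _ => prod_range fun l => F (w (T^[l] x))

theorem halfTurnSign_eq_of_comp_iterate_eq {w : Fin n → ℕ} {d q : ℕ} (hd : Odd d)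
    (hn : n = 2 * q * d) (hw : w ∘ T^[2 * q] = w) (x : Fin n) :
    halfTurnSign T w x = if w ∘ T^[q] = w then (-1) ^ birkhoffSum T w q x else 0 := by
  have hhalf : n / 2 = d * q := by
    conv_lhs => rw [hn]
    rw [mul_assoc, Nat.mul_div_cancel_left _ two_pos, mul_comm]
  have h2 : 2 ∣ n := ⟨q * d, hn.trans (mul_assoc _ _ _)⟩
  have hiff : w ∘ T^[d * q] = w ↔ w ∘ T^[q] = w := by
    simp only [comp_iterate_eq_self_iff] at hw ⊢
    refine ⟨fun h => ?_, fun h => h.mul_left d⟩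
    simpa [Nat.gcd_mul_right, (Nat.coprime_two_left.2 hd).gcd_eq_one] using Nat.dvd_gcd hw h
  simp only [halfTurnSign, h2, true_and, hhalf, hiff]
  refine if_ctx_congr Iff.rfl (fun hq => ?_) fun _ => rfl
  rw [birkhoffSum_mul_of_comp_iterate_eq hq, pow_mul, hd.neg_one_pow]

theorem sum_halfTurnSign (hT : T.IsCycleOn Set.univ) {N d : ℕ} (hN : Odd N) (hd : Odd d)
    (hdn : d ∣ n) (x : Fin n) :
    ∑ w ∈ words n N with w ∘ T^[n / d] = w, halfTurnSign T w x = if Even n then 1 else 0 := by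
  split_ifs with heven
  · obtain ⟨q, hq⟩ := (Nat.coprime_two_left.2 hd).mul_dvd_of_dvd_of_dvd heven.two_dvd hdn
    rw [mul_right_comm] at hq
    have hdiv : n / d = 2 * q := Nat.div_eq_of_eq_mul_left hd.pos hq
    rw [hdiv]
    have hsign (w : Fin n → ℕ) : (-1 : ℤ) ^ birkhoffSum T w q x =
        ∏ l ∈ range q, (-1) ^ w (T^[l] x) := (prod_pow_eq_pow_sum _ _ _).symm
    calc ∑ w ∈ words n N with w ∘ T^[2 * q] = w, halfTurnSign T w x
        = ∑ w ∈ words n N with w ∘ T^[q] = w, ∏ l ∈ range q, (-1) ^ w (T^[l] x) := by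
          rw [sum_congr rfl fun w hw =>
            halfTurnSign_eq_of_comp_iterate_eq hd hq (mem_filter.1 hw).2 x, ← sum_filter,
            filter_filter]
          simp only [hsign]
          congr 1
          refine filter_congr fun w _ => and_iff_right_of_imp fun hw => ?_
          exact comp_iterate_eq_self_iff.2 ((comp_iterate_eq_self_iff.1 hw).mul_left 2)
      _ = (∑ a ∈ range N, (-1) ^ a) ^ q :=
          sum_periodic_words hT _ N ⟨2 * d, by rw [hq]; ring⟩ x
      _ = 1 := by rw [neg_one_geom_sum, if_neg (Nat.not_even_iff_odd.2 hN), one_pow]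
  · exact sum_eq_zero fun w _ => if_neg fun h => heven (even_iff_two_dvd.2 h.1)

theorem sum_one_sub_halfTurnSign (hT : T.IsCycleOn Set.univ) {N d : ℕ} (hN : Odd N) (hd : Odd d)
    (hdn : d ∣ n) (x : Fin n) :
    ∑ w ∈ words n N with w ∘ T^[n / d] = w, (1 - halfTurnSign T w x) =
      (N : ℤ) ^ (n / d) - if Even n then 1 else 0 := by
  have hcount := sum_periodic_words hT (R := ℤ) (fun _ => 1) N (Nat.div_dvd_of_dvd hdn) x
  simp only [prod_const_one, sum_const, card_range, nsmul_one] at hcount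
  rw [sum_sub_distrib, sum_halfTurnSign hT hN hd hdn, sum_const, nsmul_one, hcount]

theorem sum_moebius_odd_divisors {e : ℕ} (he : e ≠ 0) :
    ∑ d ∈ e.divisors with Odd d, ArithmeticFunction.moebius d =
      if ∃ j, e = 2 ^ j then 1 else 0 := by
  obtain ⟨k, m, hm, rfl⟩ := Nat.exists_eq_two_pow_mul_odd he
  have hdiv : {d ∈ (2 ^ k * m).divisors | Odd d} = m.divisors := by
    ext d
    simp only [mem_filter, Nat.mem_divisors]
    refine ⟨fun ⟨⟨hd, _⟩, hodd⟩ => ⟨?_, hm.pos.ne'⟩, fun ⟨hd, _⟩ =>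
      ⟨⟨hd.mul_left _, he⟩, hm.of_dvd_nat hd⟩⟩
    exact (Nat.Coprime.pow_right k (Nat.coprime_two_right.2 hodd)).dvd_of_dvd_mul_left hd
  have hpow : (∃ j, 2 ^ k * m = 2 ^ j) ↔ m = 1 := by
    refine ⟨fun ⟨j, hj⟩ => ?_, fun h => ⟨k, by rw [h, mul_one]⟩⟩
    exact ((Nat.coprime_two_right.2 hm).pow_right j).eq_one_of_dvd (Dvd.intro_left _ hj)
  rw [hdiv, ← ArithmeticFunction.coe_mul_zeta_apply, ArithmeticFunction.moebius_mul_coe_zeta,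
    ArithmeticFunction.one_apply]
  simp only [hpow]

theorem sum_moebius_periods (hT : T.IsCycleOn Set.univ) (w : Fin n → ℕ) (hn : n ≠ 0) :
    (if ∃ j, n / wordPeriod T w = 2 ^ j then 1 else 0) =
      ∑ d ∈ n.divisors with Odd d,
        if w ∘ T^[n / d] = w then ArithmeticFunction.moebius d else 0 := by
  have hp : wordPeriod T w ∣ n := wordPeriod_dvd hT
  have he : n / wordPeriod T w ≠ 0 := Nat.div_ne_zero_iff_of_dvd hp |>.2
    ⟨hn, ne_zero_of_dvd_ne_zero hn hp⟩
  rw [← sum_moebius_odd_divisors he, ← sum_filter, filter_filter]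
  refine sum_congr ?_ fun _ _ => rfl
  ext d
  simp only [mem_filter, Nat.mem_divisors, comp_iterate_eq_self_iff]
  rw [Nat.dvd_div_iff_mul_dvd hp]
  refine ⟨fun ⟨⟨hdvd, _⟩, hodd⟩ => ?_, fun ⟨⟨hdn, _⟩, hodd, hdvd⟩ => ?_⟩
  · have hdn : d ∣ n := (Nat.dvd_mul_left d _).trans hdvd
    exact ⟨⟨hdn, hn⟩, hodd, (Nat.dvd_div_iff_mul_dvd hdn).2 (by rwa [mul_comm])⟩
  · rw [mul_comm]
    exact ⟨⟨(Nat.dvd_div_iff_mul_dvd hdn).1 hdvd, he⟩, hodd⟩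

end CountingWords

section CyclicCount

variable {n : ℕ}

theorem isCycleOn_finRotate (hn : 2 ≤ n) : (finRotate n).IsCycleOn Set.univ := by
  have hmoved : {x | finRotate n x ≠ x} = Set.univ := Set.eq_univ_of_forall fun x =>
    Perm.mem_support.1 (by rw [support_finRotate_of_le hn]; exact mem_univ x)
  exact hmoved ▸ (isCycle_finRotate_of_le hn).isCycleOn

theorem card_mul_sum_leftEnrichedCount (hn : 2 ≤ n) (N : ℕ) :
    n * ∑ π ∈ cyclicSet n, leftEnrichedCount π N =
      ∑ w ∈ words n N, #{ρ : Perm (Fin n) | IsConsistent (finRotate n) w ρ} := by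
  have hcount (ρ : Perm (Fin n)) : leftEnrichedCount (ρ * finRotate n * ρ⁻¹) N =
      #{w ∈ words n N | IsConsistent (finRotate n) w ρ} := by
    simp [leftEnrichedCount_eq_card _ ρ, IsConsistent]
  have hconj := sum_conj_eq_card_centralizer_nsmul (finRotate n) fun π => leftEnrichedCount π N
  rw [card_centralizer_finRotate hn, ← cyclicSet_eq_filter_isConj hn, smul_eq_mul] at hconj
  simp only [← hconj, hcount]
  exact sum_card_bipartiteAbove_eq_sum_card_bipartiteBelow _

theorem card_mul_sum_leftEnrichedCount_of_odd {N : ℕ} (hn : 2 ≤ n) (hN : Odd N) :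
    (n : ℤ) * ∑ π ∈ cyclicSet n, (leftEnrichedCount π N : ℤ) =
      ∑ d ∈ n.divisors with Odd d,
        ArithmeticFunction.moebius d * ((N : ℤ) ^ (n / d) - if Even n then 1 else 0) := by
  have hT := isCycleOn_finRotate hn
  let x : Fin n := ⟨0, by omega⟩
  calc (n : ℤ) * ∑ π ∈ cyclicSet n, (leftEnrichedCount π N : ℤ)
      = ∑ w ∈ words n N, (#{ρ : Perm (Fin n) | IsConsistent (finRotate n) w ρ} : ℤ) := by
        exact_mod_cast card_mul_sum_leftEnrichedCount hn N
    _ = ∑ w ∈ words n N, ∑ d ∈ n.divisors with Odd d,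
          (if w ∘ (finRotate n)^[n / d] = w then ArithmeticFunction.moebius d else 0) *
            (1 - halfTurnSign (finRotate n) w x) := by
        refine sum_congr rfl fun w _ => ?_
        rw [card_isConsistent hT x, sum_moebius_periods hT w (by omega), sum_mul]
    _ = ∑ d ∈ n.divisors with Odd d, ArithmeticFunction.moebius d *
          ∑ w ∈ words n N with w ∘ (finRotate n)^[n / d] = w,
            (1 - halfTurnSign (finRotate n) w x) := by
        rw [sum_comm]
        simp only [mul_sum, sum_filter, ite_mul, zero_mul, mul_ite, mul_zero]
    _ = _ := sum_congr rfl fun d hd => by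
        obtain ⟨hdn, hodd⟩ := mem_filter.1 hd
        rw [sum_one_sub_halfTurnSign hT hN hodd (Nat.dvd_of_mem_divisors hdn)]

end CyclicCount

/-! ### Generating functions of chain words -/

section ChainWords

/-- The strict upper bound which a letter of a chain word puts on the letter before it: equality of
the two is allowed only if `a` is nonnegative at an ascent, or negative at a descent. -/
def letterBound (asc : Prop) (a : ℕ) : ℕ :=
  if Even a ↔ asc then a + 1 else a

/-- The words that are left enriched for a permutation whose ascent into position `i` (counted from
`0`) is the proposition `asc i`. -/
def chainWords (asc : ℕ → Prop) (n N : ℕ) : Finset (Fin n → ℕ) :=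
  {f ∈ words n N | ∀ (i : ℕ) (hi : i + 1 < n),
    f ⟨i, by omega⟩ < letterBound (asc (i + 1)) (f ⟨i + 1, hi⟩)}

theorem letterBound_le_succ (p : Prop) (a : ℕ) : letterBound p a ≤ a + 1 := by
  unfold letterBound
  split_ifs <;> omega

theorem signedLexLT_iff_lt_letterBound {β : Type*} [LinearOrder β] {a b : ℕ} {r s : β}
    (hrs : r ≠ s) : SignedLexLT a b r s ↔ a < letterBound (r < s) b := by
  have hsr : s < r ↔ ¬ r < s := ⟨fun h => h.asymm, fun h => (not_lt.1 h).lt_of_ne' hrs⟩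
  unfold SignedLexLT SignedLT letterBound
  by_cases hb : Even b <;> by_cases h : r < s <;> simp only [hb, h, hsr] <;> grind

theorem isLeftEnriched_iff_castSucc_succ {m : ℕ} (π : Perm (Fin (m + 1))) (f : Fin (m + 1) → ℕ) :
    IsLeftEnriched π f ↔
      ∀ i : Fin m, SignedLexLT (f i.castSucc) (f i.succ) (π i.castSucc) (π i.succ) := by
  have hmono := Fin.strictMono_iff_lt_succ
    (f := fun x : Fin (m + 1) => toLex (f x, (-1) ^ f x * ((π x : ℕ) : ℤ)))
  simp only [StrictMono, ← signedLexLT_iff_toLex_lt, signedLexLT_intCast_iff] at hmono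
  exact ⟨fun h => hmono.1 fun x y => h x y, fun h x y hxy => hmono.2 h hxy⟩

theorem oneLine_succ {n : ℕ} (π : Perm (Fin n)) {i : ℕ} (hi : i < n) :
    oneLine n π (i + 1) = (π ⟨i, hi⟩ : ℕ) + 1 := by
  simp [oneLine, hi]

theorem leftEnrichedCount_eq_card_chainWords {n : ℕ} (π : Perm (Fin n)) (N : ℕ) :
    leftEnrichedCount π N =
      #(chainWords (fun i => oneLine n π i < oneLine n π (i + 1)) n N) := by
  refine congrArg card (filter_congr fun f _ => ?_)
  rcases n with _ | m
  · simp [IsLeftEnriched]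
  · rw [isLeftEnriched_iff_castSucc_succ, Fin.forall_iff]
    have hstep (i : ℕ) (hi : i + 1 < m + 1) :
        SignedLexLT (f ⟨i, by omega⟩) (f ⟨i + 1, hi⟩) (π ⟨i, by omega⟩) (π ⟨i + 1, hi⟩) ↔
          f ⟨i, by omega⟩ < letterBound (oneLine (m + 1) π (i + 1) < oneLine (m + 1) π (i + 2))
            (f ⟨i + 1, hi⟩) := by
      rw [oneLine_succ π hi, oneLine_succ π (i.lt_succ_self.trans hi), Nat.add_lt_add_iff_right,
        Fin.val_fin_lt]
      exact signedLexLT_iff_lt_letterBound (π.injective.ne (by simp))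
    exact ⟨fun h i hi => (hstep i hi).1 (h i (by omega)),
      fun h i hi => (hstep i (by omega)).2 (h i (by omega))⟩

variable {asc : ℕ → Prop}

theorem forall_lt_letterBound_of_mem_chainWords {n N : ℕ} {f : Fin (n + 1) → ℕ}
    (hf : f ∈ chainWords asc (n + 1) N) (x : Fin n) :
    f x.castSucc < letterBound (asc n) (f (Fin.last n)) := by
  obtain ⟨m, rfl⟩ : ∃ m, n = m + 1 := ⟨n - 1, by have := x.2; omega⟩
  have hchain := (mem_filter.1 hf).2
  have hmono : Monotone fun y : Fin (m + 1) => f y.castSucc :=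
    Fin.monotone_iff_le_succ.2 fun i =>
      Nat.lt_succ_iff.1 ((hchain i (by omega)).trans_le (letterBound_le_succ _ _))
  exact (hmono (Fin.le_last x)).trans_lt (hchain m (by omega))

theorem card_chainWords_fiber {n N a : ℕ} (ha : a < N) :
    #{f ∈ chainWords asc (n + 1) N | f (Fin.last n) = a} =
      #(chainWords asc n (letterBound (asc n) a)) := by
  refine card_nbij' (fun f => Fin.init f) (fun g => Fin.snoc g a) ?_ ?_ ?_ ?_
  · intro f hf
    obtain ⟨hchain, rfl⟩ := mem_filter.1 hf
    exact mem_filter.2 ⟨mem_words.2 fun x => forall_lt_letterBound_of_mem_chainWords hchain x,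
      fun i hi => (mem_filter.1 hchain).2 i (by omega)⟩
  · intro g hg
    obtain ⟨hlt, hchain⟩ := mem_filter.1 hg
    rw [mem_words] at hlt
    refine mem_filter.2 ⟨mem_filter.2 ⟨mem_words.2 fun x => ?_, fun i hi => ?_⟩, by simp⟩
    · refine Fin.lastCases (by simpa using ha) (fun y => ?_) x
      have := letterBound_le_succ (asc n) a
      have := hlt y
      simp only [Fin.snoc_castSucc]
      omega
    · have hsnoc (j : ℕ) (hj : j < n) :
          Fin.snoc (α := fun _ => ℕ) g a ⟨j, hj.trans n.lt_succ_self⟩ = g ⟨j, hj⟩ :=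
        Fin.snoc_castSucc (α := fun _ => ℕ) a g ⟨j, hj⟩
      beta_reduce
      rw [hsnoc i (by omega)]
      rcases (Nat.le_of_lt_succ hi).lt_or_eq with hi' | rfl
      · rw [hsnoc (i + 1) hi']
        exact hchain i hi'
      · exact (hlt _).trans_eq (congrArg _ (Fin.snoc_last (α := fun _ => ℕ) a g).symm)
  · intro f hf
    obtain ⟨-, rfl⟩ := mem_filter.1 hf
    exact Fin.snoc_init_self f
  · exact fun g _ => Fin.init_snoc (α := fun _ => ℕ) a g

theorem card_chainWords_succ (asc : ℕ → Prop) (n N : ℕ) :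
    #(chainWords asc (n + 1) N) = ∑ a ∈ range N, #(chainWords asc n (letterBound (asc n) a)) := by
  have hmaps : ∀ f ∈ chainWords asc (n + 1) N, f (Fin.last n) ∈ range N := fun f hf =>
    mem_range.2 (mem_words.1 (mem_filter.1 hf).1 _)
  rw [card_eq_sum_card_fiberwise hmaps]
  exact sum_congr rfl fun a ha => card_chainWords_fiber (mem_range.1 ha)

theorem card_chainWords_zero (asc : ℕ → Prop) (N : ℕ) : #(chainWords asc 0 N) = 1 := by
  simp [chainWords, words]

theorem card_chainWords_succ_succ (asc : ℕ → Prop) (n N : ℕ) :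
    #(chainWords asc (n + 1) (N + 1)) =
      #(chainWords asc (n + 1) N) + #(chainWords asc n (letterBound (asc n) N)) := by
  simp only [card_chainWords_succ, sum_range_succ]

end ChainWords

section GeneratingFunction

open PowerSeries hiding mk

/-- The generating function of the numbers of chain words with letters in `{-k, …, k}`. -/
def oddSeries (asc : ℕ → Prop) (n : ℕ) : ℚ⟦X⟧ :=
  PowerSeries.mk fun k => (#(chainWords asc n (2 * k + 1)) : ℚ)

/-- The generating function of the numbers of chain words with letters in `{-k, …, k - 1}`. -/
def evenSeries (asc : ℕ → Prop) (n : ℕ) : ℚ⟦X⟧ :=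
  PowerSeries.mk fun k => (#(chainWords asc n (2 * k)) : ℚ)

variable {asc : ℕ → Prop} {n : ℕ}

theorem oddSeries_succ_of_asc (h : asc n) :
    oddSeries asc (n + 1) = evenSeries asc (n + 1) + oddSeries asc n := by
  ext k
  simp [oddSeries, evenSeries, card_chainWords_succ_succ, letterBound, h]

theorem oddSeries_succ_of_not_asc (h : ¬ asc n) :
    oddSeries asc (n + 1) = evenSeries asc (n + 1) + evenSeries asc n := by
  ext k
  simp [oddSeries, evenSeries, card_chainWords_succ_succ, letterBound, h]

theorem evenSeries_succ_of_asc (h : asc n) :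
    evenSeries asc (n + 1) = X * (oddSeries asc (n + 1) + oddSeries asc n) := by
  ext (_ | k)
  · simp [evenSeries, card_chainWords_succ]
  · rw [mul_comm, coeff_succ_mul_X]
    simp [oddSeries, evenSeries, mul_add, card_chainWords_succ_succ, letterBound, h]

theorem evenSeries_succ_of_not_asc (hn : n ≠ 0) (h : ¬ asc n) :
    evenSeries asc (n + 1) = X * oddSeries asc (n + 1) + evenSeries asc n := by
  obtain ⟨m, rfl⟩ := Nat.exists_eq_succ_of_ne_zero hn
  ext (_ | k)
  · simp [evenSeries, card_chainWords_succ]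
  · rw [mul_comm, map_add, coeff_succ_mul_X]
    simp [oddSeries, evenSeries, mul_add, card_chainWords_succ_succ asc (m + 1), letterBound, h]

theorem one_add_X_mul_evenSeries (h : asc n) :
    (1 + X) * evenSeries asc (n + 1) = 2 * X * oddSeries asc (n + 1) := by
  linear_combination evenSeries_succ_of_asc h - X * oddSeries_succ_of_asc h

theorem two_mul_evenSeries (hn : n ≠ 0) (h : ¬ asc n) :
    2 * evenSeries asc (n + 1) = (1 + X) * oddSeries asc (n + 1) := by
  linear_combination evenSeries_succ_of_not_asc hn h - oddSeries_succ_of_not_asc h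

/-- The power series `(1 - X) / (1 + X)`; multiplying a generating function of chain words by it
removes the last letter, up to a factor `peakWeight` for each left peak destroyed. -/
def letterWeight : ℚ⟦X⟧ := (1 - X) * (1 + X)⁻¹

/-- The power series `4 * X / (1 + X) ^ 2`, the weight of a left peak in the generating functions of
chain words. -/
def peakWeight : ℚ⟦X⟧ := 4 * X * (1 + X)⁻¹ ^ 2

theorem one_add_X_mul_inv : (1 + X) * (1 + X)⁻¹ = (1 : ℚ⟦X⟧) :=
  PowerSeries.mul_inv_cancel _ (by simp)

theorem one_sub_peakWeight : 1 - peakWeight = letterWeight ^ 2 := by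
  unfold peakWeight letterWeight
  linear_combination (-(1 + X) * (1 + X)⁻¹ - 1) * one_add_X_mul_inv

theorem letterWeight_mul_oddSeries_of_asc (h : asc n) :
    letterWeight * oddSeries asc (n + 1) = oddSeries asc n := by
  have hstep : (1 - X) * oddSeries asc (n + 1) = (1 + X) * oddSeries asc n := by
    linear_combination (1 + X) * oddSeries_succ_of_asc h + one_add_X_mul_evenSeries h
  unfold letterWeight
  linear_combination (1 + X)⁻¹ * hstep + oddSeries asc n * one_add_X_mul_inv

theorem letterWeight_mul_oddSeries_of_not_asc (hn : n ≠ 0) (h : ¬ asc n) :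
    letterWeight * oddSeries asc (n + 1) = 2 * (1 + X)⁻¹ * evenSeries asc n := by
  have hstep : (1 - X) * oddSeries asc (n + 1) = 2 * evenSeries asc n := by
    linear_combination 2 * oddSeries_succ_of_not_asc h + two_mul_evenSeries hn h
  unfold letterWeight
  linear_combination (1 + X)⁻¹ * hstep

theorem letterWeight_mul_oddSeries_of_peak (hpk : asc n) (h : ¬ asc (n + 1)) :
    letterWeight * oddSeries asc (n + 2) = peakWeight * oddSeries asc (n + 1) := by
  rw [letterWeight_mul_oddSeries_of_not_asc n.succ_ne_zero h]
  unfold peakWeight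
  linear_combination 2 * (1 + X)⁻¹ ^ 2 * one_add_X_mul_evenSeries hpk -
    2 * (1 + X)⁻¹ * evenSeries asc (n + 1) * one_add_X_mul_inv

theorem letterWeight_mul_oddSeries_of_doubleDescent (hn : n ≠ 0) (hdes : ¬ asc n)
    (h : ¬ asc (n + 1)) :
    letterWeight * oddSeries asc (n + 2) = oddSeries asc (n + 1) := by
  rw [letterWeight_mul_oddSeries_of_not_asc n.succ_ne_zero h]
  linear_combination (1 + X)⁻¹ * two_mul_evenSeries hn hdes +
    oddSeries asc (n + 1) * one_add_X_mul_inv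

theorem letterWeight_mul_oddSeries [DecidablePred asc] (h0 : asc 0) :
    letterWeight * oddSeries asc (n + 2) =
      (if asc n ∧ ¬ asc (n + 1) then peakWeight else 1) * oddSeries asc (n + 1) := by
  by_cases hnext : asc (n + 1)
  · simp [hnext, letterWeight_mul_oddSeries_of_asc hnext]
  · by_cases hprev : asc n
    · simp [hnext, hprev, letterWeight_mul_oddSeries_of_peak hprev hnext]
    · have hn : n ≠ 0 := by rintro rfl; exact hprev h0
      simp [hprev, letterWeight_mul_oddSeries_of_doubleDescent hn hprev hnext]

theorem letterWeight_pow_mul_oddSeries [DecidablePred asc] (h0 : asc 0) (n : ℕ) :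
    letterWeight ^ (n + 1) * (1 - X) * oddSeries asc (n + 1) =
      peakWeight ^ #{i ∈ range n | asc i ∧ ¬ asc (i + 1)} := by
  rw [← prod_const, prod_filter]
  induction n with
  | zero =>
    have hone : oddSeries asc 0 = PowerSeries.mk 1 := by
      ext k
      simp [oddSeries, card_chainWords_zero]
    rw [range_zero, prod_empty, zero_add, pow_one]
    linear_combination (1 - X) * letterWeight_mul_oddSeries_of_asc h0 + (1 - X) * hone +
      mk_one_mul_one_sub_eq_one ℚ
  | succ n ih =>
    rw [prod_range_succ, ← ih]
    linear_combination letterWeight ^ (n + 1) * (1 - X) * letterWeight_mul_oddSeries (n := n) h0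

end GeneratingFunction

/-! ### The left peak polynomial of cyclic permutations -/

section LeftPeakPolynomial

open PowerSeries hiding mk

theorem aeval_injective_of_constantCoeff_eq_zero {k : Type*} [Field k] {f : k⟦X⟧} (hf : f ≠ 0)
    (hf0 : constantCoeff f = 0) : Injective (Polynomial.aeval f : Polynomial k →ₐ[k] k⟦X⟧) := by
  rw [injective_iff_map_eq_zero]
  intro q hq
  by_contra hne
  obtain ⟨r, hqr, hr⟩ := Polynomial.exists_eq_pow_rootMultiplicity_mul_and_not_dvd q hne 0
  rw [map_zero, sub_zero] at hqr hr
  rw [hqr, map_mul, map_pow, Polynomial.aeval_X] at hq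
  have hroot : Polynomial.aeval f r = 0 := (mul_eq_zero.1 hq).resolve_left (pow_ne_zero _ hf)
  have hconst := congrArg (constantCoeff (R := k)) hroot
  rw [Polynomial.aeval_def, Polynomial.hom_eval₂, hf0, Polynomial.eval₂_at_zero] at hconst
  exact hr (Polynomial.X_dvd_iff.2 (by simpa using hconst))

theorem aeval_peakWeight_injective :
    Injective (Polynomial.aeval peakWeight : Polynomial ℚ →ₐ[ℚ] ℚ⟦X⟧) := by
  refine aeval_injective_of_constantCoeff_eq_zero (fun h => ?_) (by simp [peakWeight])
  have hX : (4 : ℚ⟦X⟧) * X = 0 := by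
    unfold peakWeight at h
    linear_combination (1 + X) ^ 2 * h -
      4 * X * ((1 + X) * (1 + X)⁻¹ + 1) * one_add_X_mul_inv
  have hcoeff := congrArg (coeff (R := ℚ) 1) hX
  rw [mul_comm, ← map_ofNat (C (R := ℚ)), coeff_mul_C] at hcoeff
  simp at hcoeff

variable {n : ℕ}

theorem oneLine_ne_oneLine_succ (π : Perm (Fin n)) {i : ℕ} (hi : i + 1 < n) :
    oneLine n π (i + 1) ≠ oneLine n π (i + 2) := by
  rw [oneLine_succ π hi, oneLine_succ π (i.lt_succ_self.trans hi), Ne, Nat.add_right_cancel_iff,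
    Fin.val_inj]
  exact π.injective.ne (by simp)

theorem lpk_eq_card (π : Perm (Fin (n + 1))) :
    lpk (n + 1) π = #{i ∈ range n | oneLine (n + 1) π i < oneLine (n + 1) π (i + 1) ∧
      ¬ oneLine (n + 1) π (i + 1) < oneLine (n + 1) π (i + 2)} := by
  have hshift : Icc 1 n = (range n).map (addRightEmbedding 1) := by
    rw [range_eq_Ico, map_add_right_Ico, zero_add]
    rfl
  rw [lpk, Nat.add_sub_cancel, hshift, filter_map, card_map]
  refine congrArg Finset.card (filter_congr fun i hi => and_congr_right fun _ => ?_)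
  have hne := oneLine_ne_oneLine_succ π (Nat.add_lt_add_right (mem_range.1 hi) 1)
  exact ⟨fun h => h.asymm, fun h => (not_lt.1 h).lt_of_ne' hne⟩

theorem peakWeight_pow_lpk (hn : n ≠ 0) (π : Perm (Fin n)) :
    peakWeight ^ lpk n π =
      letterWeight ^ n * (1 - X) *
        PowerSeries.mk fun k => (leftEnrichedCount π (2 * k + 1) : ℚ) := by
  obtain ⟨m, rfl⟩ := Nat.exists_eq_succ_of_ne_zero hn
  have hfirst : oneLine (m + 1) π 0 < oneLine (m + 1) π 1 := by simp [oneLine]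
  simp only [leftEnrichedCount_eq_card_chainWords, lpk_eq_card]
  exact (letterWeight_pow_mul_oddSeries
    (asc := fun i => oneLine (m + 1) π i < oneLine (m + 1) π (i + 1)) hfirst m).symm

theorem aeval_sum_X_pow_lpk (hn : n ≠ 0) (s : Finset (Perm (Fin n))) :
    Polynomial.aeval peakWeight (∑ π ∈ s, (Polynomial.X : Polynomial ℚ) ^ lpk n π) =
      letterWeight ^ n * (1 - X) *
        PowerSeries.mk fun k => ((∑ π ∈ s, leftEnrichedCount π (2 * k + 1) : ℕ) : ℚ) := by
  have hsum : (PowerSeries.mk fun k => ((∑ π ∈ s, leftEnrichedCount π (2 * k + 1) : ℕ) : ℚ)) =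
      ∑ π ∈ s, PowerSeries.mk fun k => (leftEnrichedCount π (2 * k + 1) : ℚ) := by
    ext k
    simp
  rw [hsum, mul_sum, map_sum]
  exact sum_congr rfl fun π _ => by
    rw [map_pow, Polynomial.aeval_X, peakWeight_pow_lpk hn]

theorem aeval_leftPeakP (hn : n ≠ 0) :
    Polynomial.aeval peakWeight (leftPeakP n) =
      letterWeight ^ n * (1 - X) * PowerSeries.mk fun k => ((2 * k + 1 : ℕ) : ℚ) ^ n := by
  simp only [leftPeakP, aeval_sum_X_pow_lpk hn, sum_leftEnrichedCount, Nat.cast_pow]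

theorem aeval_one_sub_X_pow_half {m : ℕ} (hm : Even m) :
    Polynomial.aeval peakWeight ((1 - Polynomial.X : Polynomial ℚ) ^ (m / 2)) =
      letterWeight ^ m := by
  rw [map_pow, map_sub, map_one, Polynomial.aeval_X, one_sub_peakWeight, ← pow_mul,
    Nat.mul_div_cancel' hm.two_dvd]

theorem aeval_odd_divisor_term (hn : n ≠ 0) {d : ℕ} (hd : Odd d) (hdn : d ∣ n) :
    Polynomial.aeval peakWeight ((1 - Polynomial.X) ^ ((n - n / d) / 2) * leftPeakP (n / d)) =
      letterWeight ^ n * (1 - X) * PowerSeries.mk fun k => ((2 * k + 1 : ℕ) : ℚ) ^ (n / d) := by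
  obtain ⟨q, rfl⟩ := hdn
  rw [Nat.mul_div_cancel_left q hd.pos]
  have heven : Even (d * q - q) := by
    rw [← Nat.sub_one_mul]
    exact (Nat.Odd.sub_odd hd odd_one).mul_right q
  have hle : q ≤ d * q := Nat.le_mul_of_pos_left q hd.pos
  rw [map_mul, aeval_one_sub_X_pow_half heven, aeval_leftPeakP (right_ne_zero_of_mul hn),
    ← mul_assoc, ← mul_assoc, ← pow_add, Nat.sub_add_cancel hle]

theorem even_of_eq_two_pow (hn : 2 ≤ n) (h : ∃ j, n = 2 ^ j) : Even n := by
  obtain ⟨j, rfl⟩ := h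
  exact (Nat.even_pow.2 ⟨even_two, by rintro rfl; norm_num at hn⟩)

theorem rat_card_mul_sum_leftEnrichedCount (hn : 2 ≤ n) {N : ℕ} (hN : Odd N) :
    (n : ℚ) * (∑ π ∈ cyclicSet n, leftEnrichedCount π N : ℕ) =
      (∑ d ∈ n.divisors with Odd d, (ArithmeticFunction.moebius d : ℚ) * (N : ℚ) ^ (n / d)) -
        if ∃ j, n = 2 ^ j then 1 else 0 := by
  have hcorr : (∑ d ∈ n.divisors with Odd d, ArithmeticFunction.moebius d) *
      (if Even n then 1 else 0) = if ∃ j, n = 2 ^ j then 1 else 0 := by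
    rw [sum_moebius_odd_divisors (by omega), ite_mul, one_mul, zero_mul]
    exact if_ctx_congr Iff.rfl (fun h => if_pos (even_of_eq_two_pow hn h)) fun _ => rfl
  have hcount := card_mul_sum_leftEnrichedCount_of_odd hn hN
  simp only [mul_sub, sum_sub_distrib, ← sum_mul, hcorr] at hcount
  exact_mod_cast congrArg (Int.cast (R := ℚ)) hcount

theorem card_mul_sum_cyclicSet_X_pow_lpk (hn : 2 ≤ n) :
    (n : Polynomial ℚ) * ∑ π ∈ cyclicSet n, Polynomial.X ^ lpk n π =
      (∑ d ∈ n.divisors with Odd d, ((ArithmeticFunction.moebius d : ℤ) : Polynomial ℚ) *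
        ((1 - Polynomial.X) ^ ((n - n / d) / 2) * leftPeakP (n / d))) -
      if ∃ j, n = 2 ^ j then (1 - Polynomial.X) ^ (n / 2) else 0 := by
  have hn0 : n ≠ 0 := by omega
  have hcount : (n : ℚ⟦X⟧) *
      (PowerSeries.mk fun k => ((∑ π ∈ cyclicSet n, leftEnrichedCount π (2 * k + 1) : ℕ) : ℚ)) =
      (∑ d ∈ n.divisors with Odd d, ((ArithmeticFunction.moebius d : ℤ) : ℚ⟦X⟧) *
        PowerSeries.mk fun k => ((2 * k + 1 : ℕ) : ℚ) ^ (n / d)) -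
      if ∃ j, n = 2 ^ j then PowerSeries.mk 1 else 0 := by
    ext k
    have h := rat_card_mul_sum_leftEnrichedCount hn (odd_two_mul_add_one k)
    simp only [← map_natCast (C (R := ℚ)), ← map_intCast (C (R := ℚ)), map_sub, map_sum,
      coeff_C_mul, coeff_mk, apply_ite (coeff (R := ℚ) k), Pi.one_apply, map_zero]
    exact h
  have hhalf : Polynomial.aeval peakWeight
      (if ∃ j, n = 2 ^ j then (1 - Polynomial.X : Polynomial ℚ) ^ (n / 2) else 0) =
      letterWeight ^ n * (1 - X) * if ∃ j, n = 2 ^ j then PowerSeries.mk 1 else 0 := by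
    split_ifs with hpow
    · rw [aeval_one_sub_X_pow_half (even_of_eq_two_pow hn hpow), mul_assoc,
        mul_comm (1 - X), mk_one_mul_one_sub_eq_one, mul_one]
    · simp
  refine aeval_peakWeight_injective ?_
  rw [map_mul, map_natCast, aeval_sum_X_pow_lpk hn0, mul_left_comm, hcount, mul_sub, mul_sum,
    map_sub, map_sum, hhalf]
  congr 1
  refine sum_congr rfl fun d hd => ?_
  obtain ⟨hdn, hodd⟩ := mem_filter.1 hd
  rw [map_mul, map_intCast, aeval_odd_divisor_term hn0 hodd (Nat.dvd_of_mem_divisors hdn),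
    mul_left_comm]

theorem filter_odd_divisors_two_pow (j : ℕ) :
    ({d ∈ (2 ^ j).divisors | Odd d} : Finset ℕ) = {1} := by
  ext d
  simp only [mem_filter, Nat.mem_divisors, mem_singleton]
  refine ⟨fun ⟨⟨hd, _⟩, hodd⟩ => ?_, by rintro rfl; simp⟩
  exact ((Nat.coprime_two_right.2 hodd).pow_right j).eq_one_of_dvd hd

end LeftPeakPolynomial

end CyclicLeftPeaks

theorem stmt8 (n : ℕ) (hn : 2 ≤ n) :
    ((∃ j : ℕ, n = 2 ^ j) →
      (n : Polynomial ℚ) * ∑ π ∈ cyclicSet n, Polynomial.X ^ lpk n π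
        = leftPeakP n - (1 - Polynomial.X) ^ (n / 2)) ∧
    (¬ (∃ j : ℕ, n = 2 ^ j) →
      (n : Polynomial ℚ) * ∑ π ∈ cyclicSet n, Polynomial.X ^ lpk n π
        = ∑ d ∈ n.divisors.filter (fun d => Odd d),
            ((ArithmeticFunction.moebius d : ℤ) : Polynomial ℚ)
              * (1 - Polynomial.X) ^ ((n - n / d) / 2) * leftPeakP (n / d)) := by
  rw [card_mul_sum_cyclicSet_X_pow_lpk hn]
  constructor
  · rintro ⟨j, rfl⟩
    simp [filter_odd_divisors_two_pow]
  · intro hpow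
    simp only [if_neg hpow, sub_zero, mul_assoc]

end
end

section
/- Let n ≥ 2 and let (B_m(t))_{m ≥ 0} be the family of polynomials in ℚ[t] determined by the formal power series identities B_m(t) = (1−t)^{m+1} · Σ_{k ≥ 0} (2k+1)^m t^k for every m ≥ 0. If n is a power of 2, then n(1+t)² · Σ_{π ∈ 𝔠_n} 2^{udr(π)} t^{udr(π)} (1+t²)^{n−udr(π)} = 2(2^n A_n(t²) + t·B_n(t²) − t(1−t²)^n); otherwise, n(1+t)² · Σ_{π ∈ 𝔠_n} 2^{udr(π)} t^{udr(π)} (1+t²)^{n−udr(π)} = 2 Σ_{d ∣ n, d odd} μ(d) (1−t²)^{n−n/d} (2^{n/d} A_{n/d}(t²) + t·B_{n/d}(t²)). (These are the stated formulas for C_n^{udr}(2t/(1+t²)), where C_n^{udr}(t) = Σ_{π ∈ 𝔠_n} t^{udr(π)}, with denominators cleared; note udr(π) ≤ n for every π ∈ S_n.) -/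
open scoped Classical

noncomputable section

/-!
Fix `m` and count words over `{0, …, m - 1}` compatible with a permutation, for two sign patterns on
the letters. With all signs `+1` these are Stanley's `P`-partitions, and summing over the symmetric
group gives the Eulerian polynomial. With alternating signs they are left enriched `P`-partitions,
and the count for a single permutation depends only on its number of up-down runs.

Each cyclic permutation is the shift of `ZMod n` conjugated by exactly `n` bijections
`ZMod n ≃ Fin n`. Such a bijection turns a compatible word into a cyclic word, and itself becomes a
ranking of the rotations of that word in a signed lexicographic order. A primitive cyclic word has exactly one ranking, the
square of a primitive word of sign `-1` has two, and no other word has any. The number of such words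
is found by Möbius inversion over the odd divisors of `n`. For alternating signs the squares
contribute a signed sum over words of length `n / 2`, which is `1` or `0` according to the parity of
`m` and survives the inversion only when `n` is a power of two. Multiplying by `t ^ m` and summing
over `m` gives the stated identity in both cases.
-/

open Finset

section SignedCompatibility

variable {A : Type*} {n : ℕ}

lemma units_mul_lt_mul_iff (u : ℤˣ) {p q : ℤ} (hpq : p ≠ q) : u * p < u * q ↔ (p < q ↔ u = 1) := by
  rcases Int.units_eq_one_or u with rfl | rfl
  · simp
  · simp only [Units.val_neg, Units.val_one, neg_mul, one_mul, neg_lt_neg_iff]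
    have : (-1 : ℤˣ) ≠ 1 := by decide
    simp only [this, iff_false, not_lt]
    exact ⟨le_of_lt, fun h => lt_of_le_of_ne h hpq.symm⟩

lemma existsUnique_equiv_strictMono_comp {α L : Type*} [Fintype α] [LinearOrder L] {κ : α → L}
    (hκ : Function.Injective κ) (hα : Fintype.card α = n) :
    ∃! e : Fin n ≃ α, StrictMono (κ ∘ e) := by
  let _ : LinearOrder α := LinearOrder.lift' κ hκ
  let sorted := monoEquivOfFin α hα
  have h_sorted : StrictMono (κ ∘ sorted) := sorted.strictMono
  refine ⟨sorted.toEquiv, h_sorted, fun e he => Equiv.ext fun i => hκ ?_⟩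
  exact congrFun ((he.range_inj h_sorted).mp (by simp only [EquivLike.range_comp])) i

/-- The key by which equal letters `a` are ordered according to their labels `k`: increasingly if
`ε a = 1`, decreasingly if `ε a = -1`. -/
def signedKey (ε : A → ℤˣ) (a : A) (k : ℕ) : A ×ₗ ℤ := toLex (a, (ε a : ℤ) * k)

lemma signedKey_inj {ε : A → ℤˣ} {a b : A} {p q : ℕ} :
    signedKey ε a p = signedKey ε b q ↔ a = b ∧ p = q := by
  simp only [signedKey, EmbeddingLike.apply_eq_iff_eq, Prod.mk.injEq]
  refine and_congr_right fun h => ?_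
  rw [h, mul_right_inj' (Units.ne_zero _), Nat.cast_inj]

variable [LinearOrder A]

lemma signedKey_lt_signedKey {ε : A → ℤˣ} {a b : A} {p q : ℕ} :
    signedKey ε a p < signedKey ε b q ↔ a < b ∨ a = b ∧ (ε a : ℤ) * p < ε a * q := by
  simp only [signedKey, Prod.Lex.toLex_lt_toLex]
  exact or_congr_right (and_congr_right fun h => by rw [h])

/-- The word `f` is compatible with `π`: it is weakly increasing, and along each run of equal
letters `a` the values of `π` increase if `ε a = 1` and decrease if `ε a = -1`. For `ε = 1` these
are the `P`-partitions of `π`, for alternating signs its left enriched `P`-partitions. -/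
def IsCompatible (ε : A → ℤˣ) (π : Equiv.Perm (Fin n)) (f : Fin n → A) : Prop :=
  StrictMono fun i => signedKey ε (f i) (π i)

/-- The number of words compatible with `π`. -/
def compatibleCount [Fintype A] (ε : A → ℤˣ) (π : Equiv.Perm (Fin n)) : ℕ :=
  #{f : Fin n → A | IsCompatible ε π f}

lemma sum_compatibleCount [Fintype A] (ε : A → ℤˣ) :
    ∑ π : Equiv.Perm (Fin n), compatibleCount ε π = Fintype.card A ^ n := by
  have reindex (π : Equiv.Perm (Fin n)) : compatibleCount ε π
      = #{w : Fin n → A | StrictMono ((fun i => signedKey ε (w i) i) ∘ π)} :=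
    card_equiv (π.arrowCongr (Equiv.refl A)) fun f => by
      rw [mem_filter_univ, mem_filter_univ, IsCompatible]
      simp [Function.comp_def]
  have unique_sort (w : Fin n → A) :
      #{π : Equiv.Perm (Fin n) | StrictMono ((fun i => signedKey ε (w i) i) ∘ π)} = 1 := by
    obtain ⟨π, hπ, huniq⟩ := existsUnique_equiv_strictMono_comp
      (κ := fun i : Fin n => signedKey ε (w i) i)
      (fun i j h => Fin.ext (signedKey_inj.mp h).2) (Fintype.card_fin n)
    exact card_eq_one.mpr ⟨π, by ext σ; simpa using ⟨huniq σ, by rintro rfl; exact hπ⟩⟩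
  simp only [reindex, card_filter]
  rw [sum_comm]
  simp only [← card_filter, unique_sort, sum_const, card_univ, Fintype.card_fun, Fintype.card_fin,
    smul_eq_mul, mul_one]

/-- `i` is an ascent of `π`, where `π` is preceded by the letter `0` (so that `0` is always an
ascent). -/
def IsAscent (n : ℕ) (π : Equiv.Perm (Fin n)) (i : ℕ) : Prop :=
  oneLine n π i < oneLine n π (i + 1)

lemma oneLine_val_add_one (π : Equiv.Perm (Fin n)) (i : Fin n) :
    oneLine n π (i + 1) = π i + 1 := by
  simp [oneLine, i.isLt]

lemma isAscent_zero {k : ℕ} (π : Equiv.Perm (Fin (k + 1))) : IsAscent (k + 1) π 0 := by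
  simp [IsAscent, oneLine]

lemma isAscent_val_add_one {k : ℕ} (π : Equiv.Perm (Fin (k + 1))) (i : Fin k) :
    IsAscent (k + 1) π (i + 1) ↔ π i.castSucc < π i.succ := by
  have h := oneLine_val_add_one π i.castSucc
  have h' := oneLine_val_add_one π i.succ
  simp only [Fin.val_castSucc, Fin.val_succ] at h h'
  rw [IsAscent, h, h', Nat.add_lt_add_iff_right, Fin.lt_def]

lemma isCompatible_iff_forall_succ (ε : A → ℤˣ) {k : ℕ} (π : Equiv.Perm (Fin (k + 1)))
    (f : Fin (k + 1) → A) :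
    IsCompatible ε π f ↔ ∀ i : Fin k, f i.castSucc < f i.succ ∨
      f i.castSucc = f i.succ ∧ (IsAscent (k + 1) π (i + 1) ↔ ε (f i.castSucc) = 1) := by
  rw [IsCompatible, Fin.strictMono_iff_lt_succ]
  refine forall_congr' fun i => ?_
  have hne : ((π i.castSucc : ℕ) : ℤ) ≠ (π i.succ : ℕ) := by
    simp [Fin.val_inj, Fin.ext_iff]
  rw [signedKey_lt_signedKey, units_mul_lt_mul_iff _ hne, isAscent_val_add_one, Nat.cast_lt,
    Fin.lt_def]

end SignedCompatibility

open PowerSeries (X coeff coeff_succ_X_mul)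
open scoped PowerSeries

section Chains

variable {S : ℕ → ℕ → Prop}

/-- `f` is weakly increasing, and a letter `j` may be followed by itself from place `i` to place
`i + 1` only if `S (i + 1) j`. -/
def IsChainWord (S : ℕ → ℕ → Prop) {k m : ℕ} (f : Fin (k + 1) → Fin m) : Prop :=
  ∀ i : Fin k, f i.castSucc < f i.succ ∨
    f i.castSucc = f i.succ ∧ S (i + 1) (f i.castSucc)

/-- The number of words `f` of length `k + 1` with last letter `j` and `IsChainWord S f`. -/
def chainCount (S : ℕ → ℕ → Prop) : ℕ → ℕ → ℕ
  | 0, _ => 1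
  | k + 1, j => ∑ i ∈ range j, chainCount S k i + if S (k + 1) j then chainCount S k j else 0

lemma isChainWord_snoc {k m : ℕ} (g : Fin (k + 1) → Fin m) (j : Fin m) :
    IsChainWord S (Fin.snoc g j : Fin (k + 2) → Fin m) ↔
      IsChainWord S g ∧ (g (Fin.last k) < j ∨ g (Fin.last k) = j ∧ S (k + 1) j) := by
  rw [IsChainWord, Fin.forall_fin_succ', IsChainWord]
  refine and_congr (forall_congr' fun i => ?_) ?_
  · rw [← Fin.castSucc_succ, Fin.snoc_castSucc, Fin.snoc_castSucc, Fin.val_castSucc]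
  · rw [Fin.succ_last, Fin.snoc_last, Fin.snoc_castSucc, Fin.val_last]
    exact or_congr_right (and_congr_right fun h => by rw [h])

lemma card_isChainWord_snoc {k m : ℕ} (j : Fin m) :
    #{f : Fin (k + 2) → Fin m | IsChainWord S f ∧ f (Fin.last (k + 1)) = j}
      = #{g : Fin (k + 1) → Fin m |
          IsChainWord S g ∧ (g (Fin.last k) < j ∨ g (Fin.last k) = j ∧ S (k + 1) j)} := by
  refine card_nbij' Fin.init (Fin.snoc · j) ?_ ?_ ?_ fun g _ => Fin.init_snoc _ _
  · intro f hf
    obtain ⟨hf, rfl⟩ := (mem_filter_univ f).mp hf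
    refine (mem_filter_univ _).mpr (isChainWord_snoc _ _ |>.mp ?_)
    rwa [Fin.snoc_init_self]
  · intro g hg
    simpa [isChainWord_snoc] using hg
  · intro f hf
    obtain ⟨-, rfl⟩ := (mem_filter_univ f).mp hf
    exact Fin.snoc_init_self f

lemma sum_fin_ite_lt_or_eq {M : Type*} [AddCommMonoid M] {m : ℕ} (j : Fin m) (P : Prop)
    (g : ℕ → M) :
    ∑ i : Fin m, (if i < j ∨ i = j ∧ P then g i else 0)
      = ∑ i ∈ range j, g i + if P then g j else 0 := by
  have split (i : Fin m) : (if i < j ∨ i = j ∧ P then g i else 0)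
      = (if (i : ℕ) < j then g i else 0) + if i = j then (if P then g i else 0) else 0 := by
    rcases lt_trichotomy i j with h | rfl | h
    · simp [h, h.ne]
    · simp
    · simp [h.not_gt, h.ne']
  have hrange : {i ∈ range m | i < (j : ℕ)} = range j := by
    ext i
    simpa using fun h => h.trans j.isLt
  rw [sum_congr rfl fun i _ => split i, sum_add_distrib, sum_ite_eq', if_pos (mem_univ j),
    Fin.sum_univ_eq_sum_range (fun i => if i < (j : ℕ) then g i else 0), ← sum_filter, hrange]

lemma card_isChainWord_last_eq {m : ℕ} (k : ℕ) (j : Fin m) :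
    #{f : Fin (k + 1) → Fin m | IsChainWord S f ∧ f (Fin.last k) = j} = chainCount S k j := by
  induction k generalizing j with
  | zero =>
    refine card_eq_one.mpr ⟨fun _ => j, ?_⟩
    ext f
    simp [IsChainWord, funext_iff, Fin.forall_fin_one]
  | succ k ih =>
    have fiber (i : Fin m) : #{g : Fin (k + 1) → Fin m | (IsChainWord S g ∧
          (g (Fin.last k) < j ∨ g (Fin.last k) = j ∧ S (k + 1) j)) ∧ g (Fin.last k) = i}
        = if i < j ∨ i = j ∧ S (k + 1) j then chainCount S k i else 0 := by
      split_ifs with h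
      · rw [← ih]
        congr 1
        ext g
        simp only [mem_filter_univ]
        exact ⟨fun H => ⟨H.1.1, H.2⟩, fun H => ⟨⟨H.1, by rwa [H.2]⟩, H.2⟩⟩
      · refine card_eq_zero.mpr (filter_eq_empty_iff.mpr ?_)
        rintro g - ⟨hg, rfl⟩
        exact h hg.2
    rw [card_isChainWord_snoc, card_eq_sum_card_fiberwise (f := fun g => g (Fin.last k))
      (t := univ) (fun _ _ => mem_coe.mpr (mem_univ _))]
    simp only [filter_filter, fiber]
    exact sum_fin_ite_lt_or_eq j _ _

lemma card_isChainWord (k m : ℕ) :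
    #{f : Fin (k + 1) → Fin m | IsChainWord S f} = ∑ j ∈ range m, chainCount S k j := by
  rw [card_eq_sum_card_fiberwise (f := fun f => f (Fin.last k)) (t := univ)
    (fun _ _ => mem_coe.mpr (mem_univ _)), ← Fin.sum_univ_eq_sum_range]
  simp only [filter_filter, card_isChainWord_last_eq]

end Chains

section ChainSeries

variable {R : Type*} [CommRing R]

lemma one_sub_X_mul_mk_sum_range (g : ℕ → R) :
    (1 - X) * PowerSeries.mk (fun m => ∑ j ∈ range m, g j) = X * PowerSeries.mk g := by
  ext (_ | m)
  · simp
  · rw [sub_mul, one_mul, map_sub, coeff_succ_X_mul, coeff_succ_X_mul]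
    simp [sum_range_succ]

/-- The sum of the terms of `F` whose exponents satisfy `P`. -/
def restrictCoeff (P : ℕ → Prop) (F : R⟦X⟧) : R⟦X⟧ :=
  PowerSeries.mk fun j => if P j then coeff j F else 0

lemma restrictCoeff_of_forall {P : ℕ → Prop} (hP : ∀ j, P j) (F : R⟦X⟧) :
    restrictCoeff P F = F := by
  ext; simp [restrictCoeff, hP]

lemma restrictCoeff_add_restrictCoeff_not (P : ℕ → Prop) (F : R⟦X⟧) :
    restrictCoeff P F + restrictCoeff (fun j => ¬ P j) F = F := by
  ext j; by_cases h : P j <;> simp [restrictCoeff, h]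

/-- The generating function of `chainCount S k`. -/
def chainSeries (R : Type*) [CommRing R] (S : ℕ → ℕ → Prop) (k : ℕ) : R⟦X⟧ :=
  PowerSeries.mk fun j => (chainCount S k j : R)

lemma one_sub_X_mul_mk_card_isChainWord (S : ℕ → ℕ → Prop) (k : ℕ) :
    (1 - X) * PowerSeries.mk (fun m => (#{f : Fin (k + 1) → Fin m | IsChainWord S f} : R))
      = X * chainSeries R S k := by
  simp only [card_isChainWord, Nat.cast_sum]
  exact one_sub_X_mul_mk_sum_range _

lemma one_sub_X_mul_chainSeries_zero (S : ℕ → ℕ → Prop) : (1 - X) * chainSeries R S 0 = 1 := by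
  have h : chainSeries R S 0 = PowerSeries.mk 1 := by ext; simp [chainSeries, chainCount]
  rw [h, mul_comm, PowerSeries.mk_one_mul_one_sub_eq_one]

lemma one_sub_X_mul_chainSeries_succ (S : ℕ → ℕ → Prop) (k : ℕ) :
    (1 - X) * chainSeries R S (k + 1)
      = X * chainSeries R S k + (1 - X) * restrictCoeff (S (k + 1)) (chainSeries R S k) := by
  have h : chainSeries R S (k + 1) = PowerSeries.mk (fun j => ∑ i ∈ range j, (chainCount S k i : R))
      + restrictCoeff (S (k + 1)) (chainSeries R S k) := by
    ext j
    simp [chainSeries, restrictCoeff, chainCount]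
  rw [h, mul_add, one_sub_X_mul_mk_sum_range, chainSeries]

lemma one_sub_X_pow_mul_chainSeries (asc : ℕ → Prop) (k : ℕ) :
    (1 - X) ^ (k + 1) * chainSeries R (fun i _ => asc i) k
      = ∏ i ∈ Icc 1 k, if asc i then 1 else X := by
  induction k with
  | zero => simpa using one_sub_X_mul_chainSeries_zero _
  | succ k ih =>
    have step : (1 - X) * chainSeries R (fun i _ => asc i) (k + 1)
        = (if asc (k + 1) then 1 else X) * chainSeries R (fun i _ => asc i) k := by
      rw [one_sub_X_mul_chainSeries_succ]
      split_ifs with h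
      · rw [restrictCoeff_of_forall fun _ => h]
        ring
      · have hF := restrictCoeff_add_restrictCoeff_not (fun _ => asc (k + 1))
          (chainSeries R (fun i _ => asc i) k)
        rw [restrictCoeff_of_forall fun _ => h, add_eq_right] at hF
        rw [hF]
        ring
    rw [prod_Icc_succ_top (by lia), ← ih, pow_succ, mul_assoc, step]
    ring

section Alternating

variable {asc : ℕ → Prop}

lemma chainCount_alternating_succ {k j : ℕ} (h : asc k ↔ Even j) :
    chainCount (fun i j => asc i ↔ Even j) k (j + 1)
      = chainCount (fun i j => asc i ↔ Even j) k j := by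
  cases k with
  | zero => rfl
  | succ k =>
    have h' : ¬ (asc (k + 1) ↔ Even (j + 1)) := by rw [Nat.even_add_one]; tauto
    rw [chainCount, chainCount, if_neg h', if_pos h, sum_range_succ, add_zero]

lemma chainCount_alternating_zero (h₀ : asc 0) {k : ℕ} (h : ¬ asc k) :
    chainCount (fun i j => asc i ↔ Even j) k 0 = 0 := by
  cases k with
  | zero => exact absurd h₀ h
  | succ k => simp [chainCount, h]

/-- The part of the generating function `∑ j, c j X ^ j` of alternating chains consisting of the
letters `j` that the next step may repeat in the same direction. -/
def repeatableSeries (R : Type*) [CommRing R] (asc : ℕ → Prop) (k : ℕ) : R⟦X⟧ :=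
  restrictCoeff (fun j => asc k ↔ Even j) (chainSeries R (fun i j => asc i ↔ Even j) k)

lemma chainSeries_alternating (h₀ : asc 0) (k : ℕ) :
    chainSeries R (fun i j => asc i ↔ Even j) k = (1 + X) * repeatableSeries R asc k := by
  rw [add_mul, one_mul]
  ext (_ | j)
  · by_cases h : asc k
    · simp [repeatableSeries, restrictCoeff, h]
    · simp [repeatableSeries, restrictCoeff, h, chainSeries, chainCount_alternating_zero h₀ h]
  · rw [map_add, coeff_succ_X_mul]
    have h_parity : (asc k ↔ Even (j + 1)) ↔ ¬ (asc k ↔ Even j) := by rw [Nat.even_add_one]; tauto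
    simp only [repeatableSeries, restrictCoeff, chainSeries, PowerSeries.coeff_mk, h_parity]
    by_cases h : asc k ↔ Even j
    · rw [if_neg (not_not.mpr h), if_pos h, zero_add, chainCount_alternating_succ h]
    · rw [if_pos h, if_neg h, add_zero]

lemma one_sub_X_sq_mul_repeatableSeries_zero (h₀ : asc 0) :
    (1 - X ^ 2) * repeatableSeries R asc 0 = 1 := by
  have hF := one_sub_X_mul_chainSeries_zero (R := R) (fun i j => asc i ↔ Even j)
  rw [chainSeries_alternating h₀] at hF
  linear_combination hF

lemma one_sub_X_sq_mul_repeatableSeries_succ (h₀ : asc 0) (k : ℕ) :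
    (1 - X ^ 2) * repeatableSeries R asc (k + 1)
      = (if asc k ↔ asc (k + 1) then 1 + X ^ 2 else 2 * X) * repeatableSeries R asc k := by
  have hF := one_sub_X_mul_chainSeries_succ (R := R) (fun i j => asc i ↔ Even j) k
  rw [chainSeries_alternating h₀ (k + 1)] at hF
  split_ifs with h
  · have : restrictCoeff (fun j => asc (k + 1) ↔ Even j)
        (chainSeries R (fun i j => asc i ↔ Even j) k) = repeatableSeries R asc k := by
      simp only [repeatableSeries, h]
    rw [this, chainSeries_alternating h₀] at hF
    linear_combination hF
  · have hsum := restrictCoeff_add_restrictCoeff_not (fun j => asc k ↔ Even j)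
      (chainSeries R (fun i j => asc i ↔ Even j) k)
    have : (fun j : ℕ => ¬ (asc k ↔ Even j)) = fun j => asc (k + 1) ↔ Even j := by
      ext j; tauto
    rw [this, ← repeatableSeries] at hsum
    rw [chainSeries_alternating h₀ k] at hsum hF
    linear_combination hF + (1 - X : R⟦X⟧) * hsum

lemma one_sub_X_sq_pow_mul_chainSeries (h₀ : asc 0) (k : ℕ) :
    (1 - X ^ 2) ^ (k + 1) * chainSeries R (fun i j => asc i ↔ Even j) k
      = (1 + X) * ∏ i ∈ Icc 1 k, if asc (i - 1) ↔ asc i then 1 + X ^ 2 else 2 * X := by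
  rw [chainSeries_alternating h₀, mul_left_comm]
  congr 1
  induction k with
  | zero => simpa using one_sub_X_sq_mul_repeatableSeries_zero h₀
  | succ k ih =>
    rw [prod_Icc_succ_top (by lia), ← ih, pow_succ, mul_assoc,
      one_sub_X_sq_mul_repeatableSeries_succ h₀, Nat.add_sub_cancel]
    ring

end Alternating

end ChainSeries

section DescentsAndRuns

lemma oneLine_ne_oneLine_add_one {n : ℕ} (π : Equiv.Perm (Fin n)) {i : ℕ} (hi : i < n) :
    oneLine n π i ≠ oneLine n π (i + 1) := by
  rw [oneLine_val_add_one π ⟨i, hi⟩]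
  cases i with
  | zero => simp [oneLine]
  | succ i =>
    rw [oneLine_val_add_one π ⟨i, by lia⟩]
    simp [Fin.val_inj]

lemma not_isAscent_iff {n : ℕ} (π : Equiv.Perm (Fin n)) {i : ℕ} (hi : i < n) :
    ¬ IsAscent n π i ↔ oneLine n π (i + 1) < oneLine n π i :=
  not_lt.trans (oneLine_ne_oneLine_add_one π hi).symm.le_iff_lt

variable {k : ℕ} (π : Equiv.Perm (Fin (k + 1)))

lemma des_eq_card_not_isAscent :
    des (k + 1) π = #{i ∈ Icc 1 k | ¬ IsAscent (k + 1) π i} :=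
  congrArg card <| filter_congr fun _ hi =>
    (not_isAscent_iff π (Nat.lt_succ_of_le (mem_Icc.mp hi).2)).symm

/-- The number of indices in `Icc 1 k` at which `π` changes between ascending and descending. -/
def turnCount {k : ℕ} (π : Equiv.Perm (Fin (k + 1))) : ℕ :=
  #{i ∈ Icc 1 k | ¬ (IsAscent (k + 1) π (i - 1) ↔ IsAscent (k + 1) π i)}

lemma pval_eq_card_Icc_one :
    pval (k + 1) π = #{i ∈ Icc 1 k | oneLine (k + 1) π i < oneLine (k + 1) π (i - 1) ∧
      oneLine (k + 1) π i < oneLine (k + 1) π (i + 1)} := by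
  rw [pval, Nat.add_sub_cancel]
  congr 1
  ext i
  simp only [mem_filter, mem_Icc]
  refine ⟨fun h => ⟨⟨by lia, h.1.2⟩, h.2⟩, fun h => ⟨⟨?_, h.1.2⟩, h.2⟩⟩
  have h₁ : i ≠ 1 := by
    rintro rfl
    simp [oneLine] at h
  lia

lemma udr_eq_turnCount_add_one : udr (k + 1) π = turnCount π + 1 := by
  rw [udr, lpk, pval_eq_card_Icc_one, Nat.add_sub_cancel, ← card_union_of_disjoint, ← filter_or,
    turnCount]
  · congr 2
    refine filter_congr fun i hi => ?_
    obtain ⟨j, rfl⟩ := Nat.exists_eq_add_of_le' (mem_Icc.mp hi).1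
    have hj := (mem_Icc.mp hi).2
    have h₁ := not_isAscent_iff π (i := j) (by lia)
    have h₂ := not_isAscent_iff π (i := j + 1) (by lia)
    simp only [Nat.add_sub_cancel, ← h₁, ← h₂]
    change IsAscent _ π j ∧ _ ∨ _ ∧ IsAscent _ π (j + 1) ↔ _
    tauto
  · exact disjoint_filter.mpr fun i _ h h' => h.1.not_gt h'.1

end DescentsAndRuns

section CompatibleCountSeries

variable {k : ℕ} (π : Equiv.Perm (Fin (k + 1)))

lemma compatibleCount_eq_card_isChainWord (ε : ℕ → ℤˣ) (m : ℕ) :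
    compatibleCount (fun a : Fin m => ε a) π = #{f : Fin (k + 1) → Fin m |
      IsChainWord (fun i j => IsAscent (k + 1) π i ↔ ε j = 1) f} :=
  congrArg card <| filter_congr fun f _ => isCompatible_iff_forall_succ _ π f

lemma one_sub_X_mul_mk_compatibleCount (R : Type*) [CommRing R] (ε : ℕ → ℤˣ) :
    (1 - X) * PowerSeries.mk (fun m => (compatibleCount (fun a : Fin m => ε a) π : R))
      = X * chainSeries R (fun i j => IsAscent (k + 1) π i ↔ ε j = 1) k := by
  simp only [← one_sub_X_mul_mk_card_isChainWord, compatibleCount_eq_card_isChainWord]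

lemma one_sub_X_pow_mul_mk_compatibleCount_one (R : Type*) [CommRing R] :
    (1 - X) ^ (k + 2) * PowerSeries.mk (fun m => (compatibleCount (1 : Fin m → ℤˣ) π : R))
      = X ^ (des (k + 1) π + 1) := by
  have h₁ := one_sub_X_mul_mk_compatibleCount π R 1
  have h₂ := one_sub_X_pow_mul_chainSeries (R := R) (IsAscent (k + 1) π) k
  rw [prod_ite, prod_const_one, prod_const, ← des_eq_card_not_isAscent, one_mul] at h₂
  simp only [Pi.one_apply, iff_true] at h₁
  calc _ = (1 - X) ^ (k + 1) * ((1 - X) * PowerSeries.mk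
        (fun m => (compatibleCount (1 : Fin m → ℤˣ) π : R))) := by ring
    _ = (1 - X) ^ (k + 1) * (X * chainSeries R (fun i _ => IsAscent (k + 1) π i) k) := by
      rw [← h₁]; rfl
    _ = X ^ (des (k + 1) π + 1) := by rw [mul_left_comm, h₂, pow_succ']

/-- The signs `1, -1, 1, -1, …` of the letters of `Fin m`. -/
def altSign (m : ℕ) (a : Fin m) : ℤˣ := (-1) ^ (a : ℕ)

lemma sum_altSign (m : ℕ) : ∑ a, (altSign m a : ℤ) = if Odd m then 1 else 0 := by
  simp only [altSign, Units.val_pow_eq_pow_val, Units.val_neg, Units.val_one,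
    Fin.sum_univ_eq_sum_range (fun i => (-1 : ℤ) ^ i), neg_one_geom_sum, ← Nat.not_even_iff_odd,
    ite_not]

lemma two_mul_one_sub_X_sq_pow_mul_mk_compatibleCount_altSign (R : Type*) [CommRing R] :
    2 * ((1 - X ^ 2) ^ (k + 2) * PowerSeries.mk (fun m => (compatibleCount (altSign m) π : R)))
      = (1 + X) ^ 2 * (2 ^ udr (k + 1) π * X ^ udr (k + 1) π
          * (1 + X ^ 2) ^ (k + 1 - udr (k + 1) π)) := by
  have h₁ := one_sub_X_mul_mk_compatibleCount π R fun j => (-1) ^ j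
  have h_sign (j : ℕ) : (-1 : ℤˣ) ^ j = 1 ↔ Even j := neg_one_pow_eq_one_iff_even (by decide)
  simp only [h_sign] at h₁
  have h₂ := one_sub_X_sq_pow_mul_chainSeries (R := R) (isAscent_zero π) k
  have h_card : #{i ∈ Icc 1 k | IsAscent (k + 1) π (i - 1) ↔ IsAscent (k + 1) π i}
      = k - turnCount π := by
    have h := card_filter_add_card_filter_not (s := Icc 1 k)
      fun i => IsAscent (k + 1) π (i - 1) ↔ IsAscent (k + 1) π i
    rw [← turnCount, Nat.card_Icc, Nat.add_sub_cancel] at h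
    exact Nat.eq_sub_of_add_eq h
  rw [prod_ite, prod_const, prod_const, ← turnCount, h_card, mul_pow] at h₂
  change (1 - X) * PowerSeries.mk (fun m => (compatibleCount (altSign m) π : R)) = _ at h₁
  rw [udr_eq_turnCount_add_one, Nat.add_sub_add_right]
  calc _ = 2 * (1 + X) * (1 - X ^ 2) ^ (k + 1) * ((1 - X) * PowerSeries.mk
          (fun m => (compatibleCount (altSign m) π : R))) := by ring
    _ = 2 * X * (1 + X) * ((1 - X ^ 2) ^ (k + 1)
          * chainSeries R (fun i j => IsAscent (k + 1) π i ↔ Even j) k) := by rw [h₁]; ring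
    _ = _ := by rw [h₂]; ring

end CompatibleCountSeries

section EulerianSeries

lemma coe_eulerianA {n : ℕ} (hn : n ≠ 0) :
    (eulerianA n : ℚ⟦X⟧) = (1 - X) ^ (n + 1) * PowerSeries.mk fun m => (m : ℚ) ^ n := by
  obtain ⟨k, rfl⟩ := Nat.exists_eq_succ_of_ne_zero hn
  have h_words : PowerSeries.mk (fun m => (m : ℚ) ^ (k + 1))
      = ∑ π : Equiv.Perm (Fin (k + 1)),
          PowerSeries.mk fun m => (compatibleCount (1 : Fin m → ℤˣ) π : ℚ) := by
    ext m
    have h := sum_compatibleCount (n := k + 1) (1 : Fin m → ℤˣ)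
    rw [Fintype.card_fin] at h
    simp only [map_sum, PowerSeries.coeff_mk]
    exact_mod_cast h.symm
  rw [Nat.succ_eq_add_one, h_words, mul_sum]
  simp only [one_sub_X_pow_mul_mk_compatibleCount_one, eulerianA,
    ← Polynomial.coeToPowerSeries.ringHom_apply, map_sum, map_pow]
  simp only [Polynomial.coeToPowerSeries.ringHom_apply, Polynomial.coe_X]

lemma coe_comp_X_sq {R : Type*} [CommRing R] (p : Polynomial R) :
    ((p.comp (Polynomial.X ^ 2) : Polynomial R) : R⟦X⟧)
      = PowerSeries.expand 2 two_ne_zero (p : R⟦X⟧) := by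
  rw [← Polynomial.expand_eq_comp_X_pow]
  ext k
  rw [Polynomial.coeff_coe, PowerSeries.coeff_expand, Polynomial.coeff_expand two_pos,
    Polynomial.coeff_coe]

lemma expand_two_mk_even_add_X_mul_expand_two_mk_odd {R : Type*} [CommRing R] (f : ℕ → R) :
    PowerSeries.expand 2 two_ne_zero (PowerSeries.mk fun i => f (2 * i))
      + X * PowerSeries.expand 2 two_ne_zero (PowerSeries.mk fun i => f (2 * i + 1))
      = PowerSeries.mk f := by
  ext m
  rw [map_add, PowerSeries.coeff_mk]
  rcases Nat.even_or_odd' m with ⟨c, rfl | rfl⟩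
  · have h_odd : coeff (2 * c) (X * PowerSeries.expand 2 two_ne_zero
        (PowerSeries.mk fun i => f (2 * i + 1))) = 0 := by
      cases c with
      | zero => simp
      | succ c =>
        rw [show 2 * (c + 1) = (2 * c + 1) + 1 by ring, coeff_succ_X_mul,
          PowerSeries.coeff_expand_of_not_dvd _ _ _ (by lia)]
    rw [h_odd, PowerSeries.coeff_expand_mul, PowerSeries.coeff_mk, add_zero]
  · rw [coeff_succ_X_mul, PowerSeries.coeff_expand_mul, PowerSeries.coeff_mk,
      PowerSeries.coeff_expand_of_not_dvd _ _ _ (by lia), zero_add]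

lemma coe_two_pow_mul_eulerianA_comp_add {k : ℕ} (hk : k ≠ 0) {B : Polynomial ℚ}
    (hB : (B : ℚ⟦X⟧)
      = (1 - X) ^ (k + 1) * PowerSeries.mk fun i => ((2 * i + 1 : ℕ) : ℚ) ^ k) :
    ((2 ^ k * (eulerianA k).comp (Polynomial.X ^ 2)
        + Polynomial.X * B.comp (Polynomial.X ^ 2) : Polynomial ℚ) : ℚ⟦X⟧)
      = (1 - X ^ 2) ^ (k + 1) * PowerSeries.mk fun m => (m : ℚ) ^ k := by
  have h_even : PowerSeries.mk (fun i : ℕ => ((2 * i : ℕ) : ℚ) ^ k)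
      = 2 ^ k * PowerSeries.mk fun i => (i : ℚ) ^ k := by
    have h_two : (2 : ℚ⟦X⟧) ^ k = PowerSeries.C (2 ^ k) := by rw [map_pow, map_ofNat]
    ext i
    rw [h_two, PowerSeries.coeff_C_mul]
    simp [mul_pow]
  rw [← expand_two_mk_even_add_X_mul_expand_two_mk_odd, h_even]
  simp only [Polynomial.coe_add, Polynomial.coe_mul, Polynomial.coe_pow, Polynomial.coe_X,
    coe_comp_X_sq, coe_eulerianA hk, hB, map_mul, map_pow, map_sub, map_one, map_ofNat,
    PowerSeries.expand_X]
  rw [show ((2 : Polynomial ℚ) : ℚ⟦X⟧) = 2 from map_ofNat Polynomial.coeToPowerSeries.ringHom 2]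
  ring

lemma one_sub_X_sq_mul_mk_odd {R : Type*} [CommRing R] :
    (1 - X ^ 2) * PowerSeries.mk (fun m => if Odd m then (1 : R) else 0) = X := by
  have h := congrArg (PowerSeries.expand 2 two_ne_zero)
    (PowerSeries.mk_one_mul_one_sub_eq_one R)
  rw [map_mul, map_sub, map_one, PowerSeries.expand_X] at h
  rw [← expand_two_mk_even_add_X_mul_expand_two_mk_odd]
  simp only [Nat.not_odd_iff_even.mpr (even_two_mul _), odd_two_mul_add_one, if_true, if_false]
  change (1 - X ^ 2) * (PowerSeries.expand 2 two_ne_zero 0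
    + X * PowerSeries.expand 2 two_ne_zero (PowerSeries.mk 1)) = X
  rw [map_zero]
  linear_combination X * h

end EulerianSeries

section CyclicPermutations

variable {n : ℕ}

lemma isCyclicPerm_iff_isCycleOn_univ (hn : 2 ≤ n) (π : Equiv.Perm (Fin n)) :
    IsCyclicPerm n π ↔ π.IsCycleOn Set.univ := by
  have h_nontrivial : (Set.univ : Set (Fin n)).Nontrivial := by
    have : Nontrivial (Fin n) := Fin.nontrivial_iff_two_le.mpr hn
    exact Set.nontrivial_univ
  have h_card : #π.support ≤ n := by simpa using card_le_univ π.support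
  constructor
  · intro h
    rw [IsCyclicPerm, fullCycleType] at h
    have h_full : n - #π.support = 0 := by
      by_contra hne
      have h_one : (1 : ℕ) ∈ ({n} : Multiset ℕ) :=
        h ▸ Multiset.mem_add.mpr (Or.inr (Multiset.mem_replicate.mpr ⟨hne, rfl⟩))
      rw [Multiset.mem_singleton] at h_one
      lia
    rw [h_full, Multiset.replicate_zero, add_zero] at h
    have h_cycle : π.IsCycle := Equiv.Perm.card_cycleType_eq_one.mp (by rw [h]; rfl)
    have h_support : π.support = univ :=
      eq_univ_of_card _ (by rw [Fintype.card_fin]; lia)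
    have h_fixed : {i | π i ≠ i} = Set.univ := by
      rw [← Equiv.Perm.coe_support_eq_set_support, h_support, coe_univ]
    exact h_fixed ▸ h_cycle.isCycleOn
  · intro h
    have h_cycle : π.IsCycle :=
      Equiv.Perm.isCycle_iff_exists_isCycleOn.mpr ⟨_, h_nontrivial, h, fun _ _ => Set.mem_univ _⟩
    have h_support : π.support = univ := by
      ext i
      simpa using h.apply_ne h_nontrivial (Set.mem_univ i)
    rw [IsCyclicPerm, fullCycleType, h_cycle.cycleType, h_support]
    simp

/-- The permutation whose cycle notation is `(φ 0, φ 1, …, φ (n - 1))`. -/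
def cyclePerm (φ : ZMod n ≃ Fin n) : Equiv.Perm (Fin n) := φ.permCongr (Equiv.addRight 1)

lemma cyclePerm_apply (φ : ZMod n ≃ Fin n) (a : ZMod n) : cyclePerm φ (φ a) = φ (a + 1) := by
  simp [cyclePerm]

lemma cyclePerm_pow_apply (φ : ZMod n ≃ Fin n) (k : ℕ) (a : ZMod n) :
    (cyclePerm φ ^ k) (φ a) = φ (a + k) := by
  induction k with
  | zero => simp
  | succ k ih => rw [pow_succ', Equiv.Perm.mul_apply, ih, cyclePerm_apply, Nat.cast_succ, add_assoc]

lemma isCycleOn_cyclePerm [NeZero n] (φ : ZMod n ≃ Fin n) : (cyclePerm φ).IsCycleOn Set.univ := by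
  refine ⟨(cyclePerm φ).bijective.bijOn_univ, fun i _ j _ => ⟨(φ.symm j - φ.symm i).val, ?_⟩⟩
  obtain ⟨a, rfl⟩ := φ.surjective i
  rw [zpow_natCast, cyclePerm_pow_apply]
  simp

lemma card_cyclePerm_eq [NeZero n] {π : Equiv.Perm (Fin n)} (hπ : π.IsCycleOn Set.univ) :
    #{φ : ZMod n ≃ Fin n | cyclePerm φ = π} = n := by
  have h_pow (i : Fin n) {k l : ℕ} : (π ^ k) i = (π ^ l) i ↔ k ≡ l [MOD n] := by
    rw [← coe_univ] at hπ
    simpa using hπ.pow_apply_eq_pow_apply (mem_univ i)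
  have h_start (φ : ZMod n ≃ Fin n) (hφ : cyclePerm φ = π) (a : ZMod n) :
      φ a = (π ^ a.val) (φ 0) := by
    rw [← hφ, cyclePerm_pow_apply, zero_add, ZMod.natCast_zmod_val]
  conv_rhs => rw [← Fintype.card_fin n, ← card_univ]
  refine card_bij (fun φ _ => φ 0) (fun _ _ => mem_univ _) (fun φ hφ ψ hψ h => ?_) fun i _ => ?_
  · ext a
    rw [h_start φ ((mem_filter_univ φ).mp hφ), h_start ψ ((mem_filter_univ ψ).mp hψ), h]
  · have h_inj : Function.Injective fun a : ZMod n => (π ^ a.val) i := fun a b h => by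
      rw [← ZMod.natCast_zmod_val a, ← ZMod.natCast_zmod_val b]
      exact (ZMod.natCast_eq_natCast_iff _ _ _).mpr ((h_pow i).mp h)
    let φ : ZMod n ≃ Fin n := Equiv.ofBijective _ <|
      (Fintype.bijective_iff_injective_and_card _).mpr ⟨h_inj, by simp [ZMod.card]⟩
    refine ⟨φ, (mem_filter_univ φ).mpr (Equiv.ext fun j => ?_), by simp [φ]⟩
    obtain ⟨a, rfl⟩ := φ.surjective j
    rw [cyclePerm_apply]
    change (π ^ (a + 1).val) i = π ((π ^ a.val) i)
    rw [← Equiv.Perm.mul_apply, ← pow_succ', h_pow, ← ZMod.natCast_eq_natCast_iff]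
    simp

variable {A : Type*} [LinearOrder A]

/-- `φ` ranks the places of the cyclic word `x`: first by letter, and places with the same letter
by the rank of the following place, in the direction given by the sign of the letter. -/
def IsRanking (ε : A → ℤˣ) (x : ZMod n → A) (φ : ZMod n ≃ Fin n) : Prop :=
  ∀ a b, φ a < φ b ↔ signedKey ε (x a) (φ (a + 1)) < signedKey ε (x b) (φ (b + 1))

lemma isCompatible_cyclePerm_iff (ε : A → ℤˣ) (φ : ZMod n ≃ Fin n) (f : Fin n → A) :
    IsCompatible ε (cyclePerm φ) f ↔ IsRanking ε (f ∘ φ) φ := by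
  simp only [IsRanking, Function.comp_apply, ← cyclePerm_apply]
  refine ⟨fun h a b => h.lt_iff_lt.symm, fun h i j hij => ?_⟩
  simpa [hij] using h (φ.symm i) (φ.symm j)

lemma card_mul_sum_cyclicSet_compatibleCount [NeZero n] [Fintype A] (hn : 2 ≤ n) (ε : A → ℤˣ) :
    n * ∑ π ∈ cyclicSet n, compatibleCount ε π
      = ∑ x : ZMod n → A, #{φ : ZMod n ≃ Fin n | IsRanking ε x φ} := by
  have mem_cyclicSet (π) : π ∈ cyclicSet n ↔ π.IsCycleOn Set.univ :=
    (mem_filter_univ π).trans (isCyclicPerm_iff_isCycleOn_univ hn π)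
  have h_fiber : ∀ π ∈ cyclicSet n,
      ∑ φ : ZMod n ≃ Fin n with cyclePerm φ = π, compatibleCount ε (cyclePerm φ)
        = n * compatibleCount ε π := fun π hπ => by
    rw [sum_congr rfl fun φ hφ => by rw [(mem_filter_univ φ).mp hφ], sum_const,
      card_cyclePerm_eq ((mem_cyclicSet π).mp hπ), smul_eq_mul]
  have h_words (φ : ZMod n ≃ Fin n) :
      compatibleCount ε (cyclePerm φ) = #{x : ZMod n → A | IsRanking ε x φ} :=
    card_equiv (φ.symm.arrowCongr (Equiv.refl A)) fun f => by
      rw [mem_filter_univ, mem_filter_univ, isCompatible_cyclePerm_iff]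
      rfl
  rw [mul_sum, ← sum_congr rfl h_fiber, sum_fiberwise_of_maps_to
    fun φ _ => (mem_cyclicSet _).mpr (isCycleOn_cyclePerm φ)]
  simp only [h_words, card_filter]
  exact sum_comm

end CyclicPermutations

section Rankings

lemma units_smul_lt_units_smul_iff {L L' : Type*} [AddCommGroup L] [LinearOrder L]
    [IsOrderedAddMonoid L] [AddCommGroup L'] [LinearOrder L'] [IsOrderedAddMonoid L'] {p q : L}
    {p' q' : L'} (h : p < q ↔ p' < q') (h' : q < p ↔ q' < p') (u : ℤˣ) :
    (u : ℤ) • p < (u : ℤ) • q ↔ (u : ℤ) • p' < (u : ℤ) • q' := by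
  rcases Int.units_eq_one_or u with rfl | rfl
  · simpa using h
  · simpa using h'

lemma units_mul_lt_units_mul_iff {p q p' q' : ℤ} (h : p < q ↔ p' < q') (h' : q < p ↔ q' < p')
    (u : ℤˣ) : u * p < u * q ↔ u * p' < u * q' :=
  units_smul_lt_units_smul_iff h h' u

variable {A : Type*} {ε : A → ℤˣ} {n : ℕ} {x : ZMod n → A}

/-- The product of the signs of the first `k` letters of `y`. -/
def wordSign (ε : A → ℤˣ) (y : ℕ → A) (k : ℕ) : ℤˣ := ∏ i ∈ range k, ε (y i)

lemma wordSign_succ (ε : A → ℤˣ) (y : ℕ → A) (k : ℕ) :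
    wordSign ε y (k + 1) = wordSign ε y k * ε (y k) :=
  prod_range_succ _ k

lemma wordSign_add_of_periodic (ε : A → ℤˣ) {y : ℕ → A} {p : ℕ}
    (hp : Function.Periodic y p) (k : ℕ) :
    wordSign ε y (p + k) = wordSign ε y p * wordSign ε y k := by
  rw [wordSign, prod_range_add]
  congr 1
  exact prod_congr rfl fun i _ => by rw [add_comm, hp]

/-- The sequence of letters of the cyclic word `x`, read from place `0`. -/
def unroll (x : ZMod n → A) : ℕ → A := fun k => x k

lemma periodic_unroll_iff [NeZero n] {p : ℕ} :
    Function.Periodic (unroll x) p ↔ Function.Periodic x p := by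
  refine ⟨fun h a => ?_, fun h k => by simpa [unroll] using h k⟩
  simpa [unroll] using h a.val

lemma periodic_sub_of_forall_eq [NeZero n] {a b : ZMod n} (h : ∀ k : ℕ, x (a + k) = x (b + k)) :
    Function.Periodic x (b - a) := fun c => by
  simpa [add_comm, add_left_comm, sub_eq_add_neg] using (h (c - a).val).symm

lemma wordSign_unroll_add_left {p : ℕ} {a : ZMod n} (ha : Function.Periodic x a) :
    wordSign ε (fun i => x (a + i)) p = wordSign ε (unroll x) p :=
  prod_congr rfl fun i _ => congrArg ε <| (congrArg x (add_comm a i)).trans (ha i)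

variable [LinearOrder A] {φ ψ : ZMod n ≃ Fin n}

lemma IsRanking.lt_of_lt (hφ : IsRanking ε x φ) {a b : ZMod n} (h : x a < x b) :
    φ a < φ b :=
  (hφ a b).mpr (signedKey_lt_signedKey.mpr (Or.inl h))

lemma IsRanking.lt_iff_of_eq (hφ : IsRanking ε x φ) {a b : ZMod n} (h : x a = x b) :
    φ a < φ b ↔ (ε (x a) : ℤ) * φ (a + 1) < ε (x a) * φ (b + 1) := by
  rw [hφ a b, signedKey_lt_signedKey]
  simp [h]

lemma IsRanking.lt_iff_add (hφ : IsRanking ε x φ) {a b : ZMod n} {k : ℕ}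
    (h : ∀ i < k, x (a + i) = x (b + i)) :
    φ a < φ b ↔ (wordSign ε (fun i => x (a + i)) k : ℤ) * φ (a + k)
      < wordSign ε (fun i => x (a + i)) k * φ (b + k) := by
  induction k with
  | zero => simp [wordSign]
  | succ k ih =>
    have hk := h k k.lt_succ_self
    have hk_lt := hφ.lt_iff_of_eq hk
    have hk_gt := hφ.lt_iff_of_eq hk.symm
    rw [← hk] at hk_gt
    rw [ih fun i hi => h i (hi.trans k.lt_succ_self), wordSign_succ, Units.val_mul, mul_assoc,
      mul_assoc, Nat.cast_succ, ← add_assoc, ← add_assoc]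
    refine units_mul_lt_units_mul_iff ?_ ?_ _
    · rw [← hk_lt, Nat.cast_lt, Fin.lt_def]
    · rw [← hk_gt, Nat.cast_lt, Fin.lt_def]

lemma IsRanking.addRight_trans {φ : ZMod n ≃ Fin n} (hφ : IsRanking ε x φ) {p : ZMod n}
    (hp : Function.Periodic x p) : IsRanking ε x ((Equiv.addRight p).trans φ) := fun a b => by
  simpa [hp a, hp b, add_right_comm] using hφ (a + p) (b + p)

lemma equiv_fin_ext_of_lt_iff_lt {α : Type*} {φ ψ : α ≃ Fin n}
    (h : ∀ a b, φ a < φ b ↔ ψ a < ψ b) : φ = ψ := by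
  have h_mono : StrictMono (ψ ∘ φ.symm) := fun i j hij => by
    simpa [← h] using hij
  have h_id := (h_mono.range_inj strictMono_id).mp
    (((φ.symm.trans ψ).surjective.range_eq).trans Set.range_id.symm)
  ext a
  simpa using congrArg Fin.val (congrFun h_id (φ a)).symm

lemma lt_iff_lt_swap_of_injective {α L L' : Type*} [LinearOrder L] [LinearOrder L'] {f : α → L}
    {g : α → L'} (hf : Function.Injective f) (hg : Function.Injective g) {a b : α}
    (h : f a < f b ↔ g a < g b) : f b < f a ↔ g b < g a := by
  rw [← not_le, ← not_le, le_iff_lt_or_eq, le_iff_lt_or_eq, h, hf.eq_iff, hg.eq_iff]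

/-- Comparisons between places `a` and `b` propagate to the first difference of the words read from
there; so only pairs of places differing by a period of `x` leave a choice. -/
lemma IsRanking.eq_of_forall_periodic [NeZero n] (hφ : IsRanking ε x φ) (hψ : IsRanking ε x ψ)
    (h : ∀ p, Function.Periodic x p → (φ 0 < φ p ↔ ψ 0 < ψ p)) : φ = ψ := by
  have transfer {a b : ZMod n} {k : ℕ} (hk : ∀ i < k, x (a + i) = x (b + i))
      (hab : φ (a + k) < φ (b + k) ↔ ψ (a + k) < ψ (b + k)) : φ a < φ b ↔ ψ a < ψ b := by
    rw [hφ.lt_iff_add hk, hψ.lt_iff_add hk]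
    refine units_mul_lt_units_mul_iff ?_ ?_ _
    · simpa only [Nat.cast_lt, Fin.lt_def] using hab
    · simpa only [Nat.cast_lt, Fin.lt_def] using
        lt_iff_lt_swap_of_injective φ.injective ψ.injective hab
  refine equiv_fin_ext_of_lt_iff_lt fun a b => ?_
  by_cases hab : ∀ k : ℕ, x (a + k) = x (b + k)
  · have hp := periodic_sub_of_forall_eq hab
    refine transfer (k := (-a).val) (fun i _ => hab i) ?_
    simpa [← sub_eq_add_neg] using h (b - a) hp
  · push Not at hab
    refine transfer (fun i hi => not_not.mp (Nat.find_min hab hi)) ?_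
    rcases lt_or_gt_of_ne (Nat.find_spec hab) with hlt | hgt
    · exact iff_of_true (hφ.lt_of_lt hlt) (hψ.lt_of_lt hlt)
    · exact iff_of_false (hφ.lt_of_lt hgt).not_gt (hψ.lt_of_lt hgt).not_gt

lemma IsRanking.lt_iff_of_periodic (hφ : IsRanking ε x φ) {a b : ZMod n} (k : ℕ)
    (ha : Function.Periodic x a) (hb : Function.Periodic x b) :
    φ a < φ b ↔ (wordSign ε (unroll x) k : ℤ) * φ (a + k)
      < wordSign ε (unroll x) k * φ (b + k) := by
  rw [← wordSign_unroll_add_left ha]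
  exact hφ.lt_iff_add fun i _ => by rw [add_comm a, add_comm b, ha, hb]

/-- Otherwise the ranks would be monotone along the multiples of `p`, which return to `0`. -/
lemma IsRanking.wordSign_eq_neg_one [NeZero n] (hφ : IsRanking ε x φ) {p : ℕ}
    (hp : Function.Periodic x p) (hp₀ : (p : ZMod n) ≠ 0) :
    wordSign ε (unroll x) p = -1 := by
  refine (Int.units_eq_one_or _).resolve_left fun h_one => ?_
  let f : ℕ → Fin n := fun j => φ (j * p)
  have h_period (j : ℕ) : Function.Periodic x (j * p : ZMod n) := hp.nat_mul j
  have h_add (j : ℕ) : (j * p : ZMod n) + p = (j + 1 : ℕ) * p := by push_cast; ring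
  have h_step (j : ℕ) : f j < f (j + 1) ↔ f (j + 1) < f (j + 2) := by
    have := hφ.lt_iff_of_periodic p (h_period j) (h_period (j + 1))
    simpa [h_one, h_add, f, -Nat.cast_add] using this
  have h_first (j : ℕ) : f j < f (j + 1) ↔ f 0 < f 1 := by
    induction j with
    | zero => rfl
    | succ j ih => rw [← h_step, ih]
  have h_ne (j : ℕ) : f j ≠ f (j + 1) := fun h =>
    hp₀ (left_eq_add.mp ((φ.injective h).trans (h_add j).symm))
  have h_closed : f n = f 0 := by simp [f]
  by_cases h : f 0 < f 1
  · have h_mono : StrictMono f := strictMono_nat_of_lt_succ fun j => (h_first j).mpr h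
    exact NeZero.ne n (h_mono.injective h_closed)
  · have h_anti : StrictAnti f := strictAnti_nat_of_succ_lt fun j =>
      lt_of_le_of_ne (not_lt.mp ((h_first j).not.mpr h)) (h_ne j).symm
    exact NeZero.ne n (h_anti.injective h_closed)

lemma IsRanking.two_mul_eq_zero [NeZero n] (hφ : IsRanking ε x φ) {p : ℕ}
    (hp : Function.Periodic x p) (hp₀ : (p : ZMod n) ≠ 0) : ((2 * p : ℕ) : ZMod n) = 0 := by
  by_contra h
  have hp_two : Function.Periodic x ((2 * p : ℕ) : ZMod n) := by
    simpa using hp.nat_mul 2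
  have h_double := hφ.wordSign_eq_neg_one hp_two h
  rw [two_mul, wordSign_add_of_periodic ε (periodic_unroll_iff.mpr hp),
    hφ.wordSign_eq_neg_one hp hp₀] at h_double
  exact absurd h_double (by decide)

end Rankings

section Existence

lemma toLex_lt_toLex_iff_tail_lt {α : Type*} [Preorder α] {f g : ℕ → α} (h : f 0 = g 0) :
    toLex f < toLex g ↔ toLex (fun k => f (k + 1)) < toLex (fun k => g (k + 1)) := by
  constructor
  · rintro ⟨_ | k, hk, hlt⟩
    · exact absurd hlt (by simp [h])
    · exact ⟨k, fun j hj => hk (j + 1) (Nat.succ_lt_succ hj), hlt⟩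
  · rintro ⟨k, hk, hlt⟩
    refine ⟨k + 1, fun j hj => ?_, hlt⟩
    cases j with
    | zero => exact h
    | succ j => exact hk j (Nat.lt_of_succ_lt_succ hj)

lemma eq_iff_tail_eq {α : Type*} {f g : ℕ → α} (h : f 0 = g 0) :
    f = g ↔ (fun k => f (k + 1)) = fun k => g (k + 1) := by
  refine ⟨fun hfg => hfg ▸ rfl, fun hfg => funext fun k => ?_⟩
  cases k with
  | zero => exact h
  | succ k => exact congrFun hfg k

variable {A : Type*}

/-- The sequence of values `r (y k)`, with its sign flipped after each letter of sign `-1`. The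
lexicographic order of these sequences is the signed lexicographic order of words. -/
def signedSeq (ε : A → ℤˣ) (r : A → ℤ) (y : ℕ → A) (k : ℕ) : ℤ := wordSign ε y k * r (y k)

lemma signedSeq_zero (ε : A → ℤˣ) (r : A → ℤ) (y : ℕ → A) : signedSeq ε r y 0 = r (y 0) := by
  simp [signedSeq, wordSign]

lemma signedSeq_succ (ε : A → ℤˣ) (r : A → ℤ) (y : ℕ → A) (k : ℕ) :
    signedSeq ε r y (k + 1) = ε (y 0) * signedSeq ε r (fun i => y (i + 1)) k := by
  rw [signedSeq, signedSeq, wordSign, prod_range_succ', wordSign]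
  push_cast
  ring

lemma signedSeq_injective (ε : A → ℤˣ) {r : A → ℤ} (hr : Function.Injective r) :
    Function.Injective (signedSeq ε r) := by
  have h_head {y z : ℕ → A} (h : signedSeq ε r y = signedSeq ε r z) : y 0 = z 0 :=
    hr (by rw [← signedSeq_zero ε r, h, signedSeq_zero])
  intro y z h
  funext k
  induction k generalizing y z with
  | zero => exact h_head h
  | succ _ ih =>
    refine ih (y := fun i => y (i + 1)) (z := fun i => z (i + 1)) (funext fun i => ?_)
    have h_succ := congrFun h (i + 1)
    rwa [signedSeq_succ, signedSeq_succ, h_head h, mul_right_inj' (Units.ne_zero _)] at h_succ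

variable [LinearOrder A] {ε : A → ℤˣ} {n : ℕ} {x : ZMod n → A}

lemma exists_isRanking_of_key [NeZero n] {L : Type*} [AddCommGroup L] [LinearOrder L]
    [IsOrderedAddMonoid L] {κ : ZMod n → L} (hκ : Function.Injective κ)
    (h_lt : ∀ a b, x a < x b → κ a < κ b)
    (h_eq : ∀ a b, x a = x b →
      (κ a < κ b ↔ (ε (x a) : ℤ) • κ (a + 1) < (ε (x a) : ℤ) • κ (b + 1))) :
    ∃ φ : ZMod n ≃ Fin n, IsRanking ε x φ := by
  obtain ⟨e, he, -⟩ := existsUnique_equiv_strictMono_comp hκ (ZMod.card n)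
  have h_key (a b : ZMod n) : e.symm a < e.symm b ↔ κ a < κ b := by
    simpa using (he.lt_iff_lt (a := e.symm a) (b := e.symm b)).symm
  refine ⟨e.symm, fun a b => ?_⟩
  rw [h_key, signedKey_lt_signedKey]
  rcases lt_trichotomy (x a) (x b) with h | h | h
  · simp [h, h_lt a b h]
  · rw [h_eq a b h, units_smul_lt_units_smul_iff (p' := ((e.symm (a + 1) : ℕ) : ℤ))
      (q' := (e.symm (b + 1) : ℕ))]
    · simp [h]
    · rw [← h_key, Nat.cast_lt, Fin.lt_def]
    · rw [← h_key, Nat.cast_lt, Fin.lt_def]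
  · simp [h.not_gt, h.ne', (h_lt b a h).not_gt]

lemma exists_isRanking [NeZero n] [Finite A] {t : ZMod n → ℤ}
    (ht : ∀ a, t a = ε (x a) * t (a + 1))
    (ht_inj : ∀ a b, (∀ k : ℕ, x (a + k) = x (b + k)) → t a = t b → a = b) :
    ∃ φ : ZMod n ≃ Fin n, IsRanking ε x φ := by
  let _ := Fintype.ofFinite A
  let r : A → ℤ := fun a => ((monoEquivOfFin A rfl).symm a : ℕ)
  have hr : StrictMono r := fun a b h => Nat.cast_lt.mpr ((monoEquivOfFin A rfl).symm.strictMono h)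
  let s (a : ZMod n) : ℕ → ℤ := signedSeq ε r fun k : ℕ => x (a + k)
  have s_zero (a : ZMod n) : s a 0 = r (x a) := by simp [s, signedSeq_zero]
  have s_tail (a : ZMod n) : (fun k => s a (k + 1)) = (ε (x a) : ℤ) • s (a + 1) :=
    funext fun k => by simp [s, signedSeq_succ, add_right_comm a 1, ← add_assoc]
  refine exists_isRanking_of_key (κ := fun a => toLex (toLex (s a), t a)) (fun a b h => ?_)
    (fun a b h => ?_) fun a b h => ?_
  · simp only [s, EmbeddingLike.apply_eq_iff_eq, Prod.mk.injEq] at h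
    exact ht_inj a b (congrFun (signedSeq_injective ε hr.injective h.1)) h.2
  · refine Prod.Lex.toLex_lt_toLex.mpr (Or.inl ⟨0, by simp, ?_⟩)
    change s a 0 < s b 0
    rw [s_zero, s_zero]
    exact hr h
  · have h_smul (c : ZMod n) (hc : x a = x c) :
        (ε (x a) : ℤ) • toLex (toLex (s (c + 1)), t (c + 1))
          = toLex (toLex fun k => s c (k + 1), t c) := by
      rw [ht c, s_tail, hc]
      rfl
    have h_head : s a 0 = s b 0 := by rw [s_zero, s_zero, h]
    simp only [h_smul a rfl, h_smul b h, Prod.Lex.toLex_lt_toLex, EmbeddingLike.apply_eq_iff_eq,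
      eq_iff_tail_eq h_head]
    exact or_congr_left (toLex_lt_toLex_iff_tail_lt h_head)

end Existence

section RankingCount

variable {A : Type*}

/-- The least positive period of `y`, or `0` if `y` is not periodic. -/
def leastPeriod (y : ℕ → A) : ℕ := Function.minimalPeriod (fun z i => z (i + 1)) y

lemma periodic_iff_leastPeriod_dvd {y : ℕ → A} {k : ℕ} :
    Function.Periodic y k ↔ leastPeriod y ∣ k := by
  have h_iterate : (fun (z : ℕ → A) i => z (i + 1))^[k] y = fun i => y (i + k) := by
    induction k with
    | zero => rfl
    | succ k ih => simp only [Function.iterate_succ_apply', ih, add_assoc, add_comm 1 k]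
  rw [leastPeriod, ← Function.isPeriodicPt_iff_minimalPeriod_dvd, Function.IsPeriodicPt,
    Function.IsFixedPt, h_iterate, funext_iff, Function.Periodic]

variable {ε : A → ℤˣ} {n : ℕ} [NeZero n] {x : ZMod n → A}

lemma periodic_natCast_iff_leastPeriod_dvd {p : ℕ} :
    Function.Periodic x p ↔ leastPeriod (unroll x) ∣ p :=
  periodic_unroll_iff.symm.trans periodic_iff_leastPeriod_dvd

lemma leastPeriod_unroll_dvd : leastPeriod (unroll x) ∣ n :=
  periodic_natCast_iff_leastPeriod_dvd.mp fun a => by simp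

/-- The potential `a ↦ ε (x 0) ⋯ ε (x (a - 1))` on the places of `x`. -/
def placeSign (ε : A → ℤˣ) (x : ZMod n → A) (a : ZMod n) : ℤˣ := wordSign ε (unroll x) a.val

lemma placeSign_natCast (h : wordSign ε (unroll x) n = 1) (k : ℕ) :
    placeSign ε x k = wordSign ε (unroll x) k := by
  have h_periodic : Function.Periodic (wordSign ε (unroll x)) n := fun k => by
    rw [add_comm, wordSign_add_of_periodic ε (periodic_unroll_iff.mpr fun a => by simp), h,
      one_mul]
  rw [placeSign, ZMod.val_natCast, h_periodic.map_mod_nat]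

lemma placeSign_eq_mul (h : wordSign ε (unroll x) n = 1) (a : ZMod n) :
    placeSign ε x a = ε (x a) * placeSign ε x (a + 1) := by
  obtain ⟨k, rfl⟩ := ZMod.natCast_zmod_surjective a
  rw [← Nat.cast_succ, placeSign_natCast h, placeSign_natCast h, wordSign_succ, unroll,
    mul_left_comm, Int.units_mul_self, mul_one]

lemma placeSign_add_period (h : wordSign ε (unroll x) n = 1) {p : ℕ} (hp : Function.Periodic x p)
    (a : ZMod n) : placeSign ε x (a + p) = wordSign ε (unroll x) p * placeSign ε x a := by
  obtain ⟨k, rfl⟩ := ZMod.natCast_zmod_surjective a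
  rw [← Nat.cast_add, placeSign_natCast h, placeSign_natCast h, add_comm,
    wordSign_add_of_periodic ε (periodic_unroll_iff.mpr hp)]

variable [LinearOrder A] [Finite A]

lemma card_isRanking_eq_one (h : ∀ c, Function.Periodic x c → c = 0) :
    #{φ : ZMod n ≃ Fin n | IsRanking ε x φ} = 1 := by
  obtain ⟨φ, hφ⟩ : ∃ φ : ZMod n ≃ Fin n, IsRanking ε x φ :=
    exists_isRanking (t := 0) (by simp) fun a b hab _ =>
      (sub_eq_zero.mp (h _ (periodic_sub_of_forall_eq hab))).symm
  refine card_eq_one.mpr ⟨φ, eq_singleton_iff_unique_mem.mpr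
    ⟨(mem_filter_univ φ).mpr hφ, fun ψ hψ => ?_⟩⟩
  refine ((mem_filter_univ ψ).mp hψ).eq_of_forall_periodic hφ fun c hc => ?_
  simp [h c hc]

lemma card_isRanking_eq_two {p : ℕ} (hp : Function.Periodic x p) (hp₀ : (p : ZMod n) ≠ 0)
    (hn : 2 * p = n) (h_sign : wordSign ε (unroll x) p = -1)
    (h : ∀ c, Function.Periodic x c → c = 0 ∨ c = p) :
    #{φ : ZMod n ≃ Fin n | IsRanking ε x φ} = 2 := by
  have h_double : (p : ZMod n) + p = 0 := by
    rw [← two_mul, ← ZMod.natCast_self n]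
    exact_mod_cast congrArg (Nat.cast (R := ZMod n)) hn
  have h_total : wordSign ε (unroll x) n = 1 := by
    refine (congrArg (wordSign ε (unroll x)) (hn.symm.trans (two_mul p))).trans ?_
    rw [wordSign_add_of_periodic ε (periodic_unroll_iff.mpr hp), h_sign, Int.units_mul_self]
  obtain ⟨φ, hφ⟩ : ∃ φ : ZMod n ≃ Fin n, IsRanking ε x φ := by
    refine exists_isRanking (t := fun a => placeSign ε x a)
      (fun a => by exact_mod_cast placeSign_eq_mul h_total a) fun a b hab ht => ?_
    rcases h _ (periodic_sub_of_forall_eq hab) with hc | hc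
    · exact (sub_eq_zero.mp hc).symm
    · rw [sub_eq_iff_eq_add'.mp hc, placeSign_add_period h_total hp, h_sign] at ht
      rw [neg_one_mul, Units.val_neg, self_eq_neg] at ht
      exact absurd ht (Units.ne_zero _)
  let ψ := (Equiv.addRight (p : ZMod n)).trans φ
  have hψ : IsRanking ε x ψ := hφ.addRight_trans hp
  have hψ_lt : ψ 0 < ψ p ↔ ¬ φ 0 < φ p := by
    have h_ne : φ 0 ≠ φ p := fun h => hp₀ (φ.injective h).symm
    simp [ψ, h_double, h_ne.symm.le_iff_lt]
  have hφψ : φ ≠ ψ := fun h => by rw [← h] at hψ_lt; exact (iff_not_self hψ_lt)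
  refine card_eq_two.mpr ⟨φ, ψ, hφψ, ?_⟩
  ext χ
  rw [mem_filter_univ, mem_insert, mem_singleton]
  refine ⟨fun hχ => ?_, by rintro (rfl | rfl) <;> assumption⟩
  have h_choice {χ' : ZMod n ≃ Fin n} (hχ' : IsRanking ε x χ')
      (h_iff : χ 0 < χ p ↔ χ' 0 < χ' p) : χ = χ' :=
    hχ.eq_of_forall_periodic hχ' fun c hc => by
      rcases h c hc with rfl | rfl
      · simp
      · exact h_iff
  by_cases h_lt : χ 0 < χ p ↔ φ 0 < φ p
  · exact Or.inl (h_choice hφ h_lt)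
  · exact Or.inr (h_choice hψ (by tauto))

lemma card_isRanking (ε : A → ℤˣ) (x : ZMod n → A) :
    #{φ : ZMod n ≃ Fin n | IsRanking ε x φ} = (if leastPeriod (unroll x) = n then 1 else 0)
      + if 2 * leastPeriod (unroll x) = n
          ∧ wordSign ε (unroll x) (leastPeriod (unroll x)) = -1 then 2 else 0 := by
  have hp : Function.Periodic x (leastPeriod (unroll x)) :=
    periodic_natCast_iff_leastPeriod_dvd.mpr dvd_rfl
  have h_dvd_val (c : ZMod n) (hc : Function.Periodic x c) : leastPeriod (unroll x) ∣ c.val :=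
    periodic_natCast_iff_leastPeriod_dvd.mp (by rwa [ZMod.natCast_zmod_val])
  obtain ⟨q, hq⟩ := leastPeriod_unroll_dvd (x := x)
  generalize leastPeriod (unroll x) = p at *
  have hn : 0 < n := NeZero.pos n
  have hp_pos : 0 < p := Nat.pos_of_mul_pos_right (hq ▸ hn)
  by_cases hpn : p = n
  · rw [if_pos hpn, if_neg (by lia), card_isRanking_eq_one fun c hc => ?_]
    exact (ZMod.val_eq_zero c).mp (Nat.eq_zero_of_dvd_of_lt (h_dvd_val c hc) (hpn ▸ c.val_lt))
  have hp₀ : (p : ZMod n) ≠ 0 := fun h =>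
    hpn (Nat.dvd_antisymm ⟨q, hq⟩ ((ZMod.natCast_eq_zero_iff p n).mp h))
  rw [if_neg hpn]
  split_ifs with h
  · refine card_isRanking_eq_two hp hp₀ h.1 h.2 fun c hc => ?_
    obtain ⟨j, hj⟩ := h_dvd_val c hc
    have hj_lt : j < 2 := by have := c.val_lt; nlinarith
    rw [← ZMod.natCast_zmod_val c, hj]
    interval_cases j <;> simp
  · rw [card_eq_zero, filter_eq_empty_iff]
    refine fun φ _ hφ => h ⟨?_, hφ.wordSign_eq_neg_one hp hp₀⟩
    have h_dvd : n ∣ 2 * p := (ZMod.natCast_eq_zero_iff _ _).mp (hφ.two_mul_eq_zero hp hp₀)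
    have hq_dvd : q ∣ 2 := Nat.dvd_of_mul_dvd_mul_left hp_pos (by rwa [← hq, mul_comm p 2])
    rcases (Nat.dvd_prime Nat.prime_two).mp hq_dvd with rfl | rfl <;> lia

end RankingCount

section OddMoebius

lemma filter_odd_divisors_two_pow_mul (k : ℕ) {m : ℕ} (hm : Odd m) :
    {d ∈ (2 ^ k * m).divisors | Odd d} = m.divisors := by
  ext d
  simp only [mem_filter, Nat.mem_divisors, mul_ne_zero_iff]
  constructor
  · rintro ⟨⟨h_dvd, h_ne⟩, h_odd⟩
    exact ⟨(Nat.Coprime.pow_right k h_odd.coprime_two_right).dvd_of_dvd_mul_left h_dvd, h_ne.2⟩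
  · rintro ⟨h_dvd, h_ne⟩
    exact ⟨⟨h_dvd.mul_left _, by positivity, h_ne⟩, hm.of_dvd_nat h_dvd⟩

lemma eq_sum_odd_divisors_moebius_mul {R : Type*} [NonAssocRing R] {f g : ℕ → R}
    (h : ∀ n > 0, ∑ d ∈ n.divisors with Odd d, f (n / d) = g n) {n : ℕ} (hn : 0 < n) :
    f n = ∑ d ∈ n.divisors with Odd d, ((ArithmeticFunction.moebius d : ℤ) : R) * g (n / d) := by
  obtain ⟨k, m, hm, rfl⟩ := Nat.exists_eq_two_pow_mul_odd hn.ne'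
  have h_quot {i d : ℕ} (hd : d ∈ i.divisors) : 2 ^ k * i / d = 2 ^ k * (i / d) :=
    Nat.mul_div_assoc _ (Nat.dvd_of_mem_divisors hd)
  have h_sum : ∀ i > 0, i ∈ {i : ℕ | Odd i} → ∑ d ∈ i.divisors, f (2 ^ k * d) = g (2 ^ k * i) := by
    intro i hi hi_odd
    rw [← h _ (by positivity), filter_odd_divisors_two_pow_mul k hi_odd,
      ← Nat.sum_div_divisors i fun d => f (2 ^ k * d)]
    exact sum_congr rfl fun d hd => by rw [h_quot hd]
  rw [filter_odd_divisors_two_pow_mul k hm,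
    ← (ArithmeticFunction.sum_eq_iff_sum_mul_moebius_eq_on {i : ℕ | Odd i}
      fun _ _ h_dvd h_odd => Odd.of_dvd_nat h_odd h_dvd).mp h_sum m hm.pos hm,
    Nat.sum_divisorsAntidiagonal
      fun d e => ((ArithmeticFunction.moebius d : ℤ) : R) * g (2 ^ k * e)]
  exact sum_congr rfl fun d hd => by rw [h_quot hd]

lemma sum_odd_divisors_moebius {n : ℕ} (hn : n ≠ 0) :
    ∑ d ∈ n.divisors with Odd d, ArithmeticFunction.moebius d
      = if ∃ j : ℕ, n = 2 ^ j then 1 else 0 := by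
  obtain ⟨k, m, hm, rfl⟩ := Nat.exists_eq_two_pow_mul_odd hn
  have h_iff : (∃ j : ℕ, 2 ^ k * m = 2 ^ j) ↔ m = 1 := by
    refine ⟨fun ⟨j, hj⟩ => ?_, fun h => ⟨k, by rw [h, mul_one]⟩⟩
    have h_coprime : Nat.Coprime m (2 ^ j) := Nat.Coprime.pow_right j hm.coprime_two_right
    exact h_coprime.eq_one_of_dvd (hj ▸ dvd_mul_left m _)
  rw [filter_odd_divisors_two_pow_mul k hm, ← ArithmeticFunction.coe_zeta_mul_apply (R := ℤ),
    ArithmeticFunction.coe_zeta_mul_moebius, ArithmeticFunction.one_apply]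
  exact if_congr h_iff.symm rfl rfl

lemma sum_odd_divisors_ite_div_eq {n : ℕ} (hn : n ≠ 0) (m : ℕ) (c : ℤ) :
    (∑ d ∈ n.divisors with Odd d, if m = n / d then c else 0)
      = if m ∣ n ∧ Odd (n / m) then c else 0 := by
  split_ifs with h
  · rw [sum_eq_single_of_mem (n / m)]
    · rw [if_pos (Nat.div_div_self h.1 hn).symm]
    · exact mem_filter.mpr ⟨Nat.mem_divisors.mpr ⟨Nat.div_dvd_of_dvd h.1, hn⟩, h.2⟩
    · rintro d hd hne
      rw [mem_filter, Nat.mem_divisors] at hd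
      exact if_neg fun h_eq => hne (by rw [h_eq, Nat.div_div_self hd.1.1 hn])
  · refine sum_eq_zero fun d hd => if_neg ?_
    rintro rfl
    rw [mem_filter, Nat.mem_divisors] at hd
    exact h ⟨Nat.div_dvd_of_dvd hd.1.1, (Nat.div_div_self hd.1.1 hn).symm ▸ hd.2⟩

end OddMoebius

section RankedWordCount

variable {A : Type*} {ε : A → ℤˣ} {n : ℕ}

lemma unroll_injective [NeZero n] : Function.Injective (unroll : (ZMod n → A) → ℕ → A) :=
  fun x x' h => funext fun a => by simpa [unroll] using congrFun h a.val

lemma range_unroll [NeZero n] :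
    Set.range (unroll : (ZMod n → A) → ℕ → A) = {y | leastPeriod y ∣ n} := by
  ext y
  refine ⟨fun ⟨x, hx⟩ => hx ▸ leastPeriod_unroll_dvd, fun hy => ⟨fun a => y a.val, ?_⟩⟩
  funext k
  rw [unroll, ZMod.val_natCast, (periodic_iff_leastPeriod_dvd.mpr hy).map_mod_nat]

lemma ncard_eq_card_unroll [NeZero n] [Fintype A] {Q : (ℕ → A) → Prop}
    (hQ : ∀ y, Q y → leastPeriod y ∣ n) :
    {y | Q y}.ncard = #{x : ZMod n → A | Q (unroll x)} := by
  have h_image : {y | Q y} = unroll '' ({x : ZMod n → A | Q (unroll x)} : Set (ZMod n → A)) := by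
    change _ = unroll '' (unroll ⁻¹' {y | Q y})
    rw [Set.image_preimage_eq_of_subset (range_unroll (A := A) (n := n) ▸ hQ)]
  rw [h_image, Set.ncard_image_of_injective _ unroll_injective, ← Set.ncard_coe_finset]
  simp

lemma sum_unroll_of_dvd [NeZero n] [Fintype A] {m : ℕ} [NeZero m] (hmn : m ∣ n) (F : (ℕ → A) → ℤ) :
    ∑ x : ZMod m → A, F (unroll x)
      = ∑ x : ZMod n → A, if leastPeriod (unroll x) ∣ m then F (unroll x) else 0 := by
  have h_mem (y : ℕ → A) {k : ℕ} [NeZero k] :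
      (∃ x : ZMod k → A, unroll x = y) ↔ leastPeriod y ∣ k :=
    Set.ext_iff.mp range_unroll y
  rw [← sum_filter, ← sum_image (f := F) unroll_injective.injOn,
    ← sum_image (f := F) unroll_injective.injOn]
  refine sum_congr (Finset.ext fun y => ?_) fun _ _ => rfl
  simp only [mem_image, mem_filter_univ, mem_univ, true_and, h_mem]
  refine ⟨fun hy => ?_, by rintro ⟨x, hx, rfl⟩; exact hx⟩
  obtain ⟨x, rfl⟩ := (h_mem (k := n) y).mpr (hy.trans hmn)
  exact ⟨x, hy, rfl⟩

lemma wordSign_mul_of_periodic (ε : A → ℤˣ) {y : ℕ → A} {p : ℕ} (hp : Function.Periodic y p)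
    (r : ℕ) : wordSign ε y (p * r) = wordSign ε y p ^ r := by
  induction r with
  | zero => simp [wordSign]
  | succ r ih => rw [Nat.mul_succ, add_comm, wordSign_add_of_periodic ε hp, ih, pow_succ, mul_comm]

lemma sum_wordSign_unroll [NeZero n] [Fintype A] (ε : A → ℤˣ) :
    ∑ x : ZMod n → A, (wordSign ε (unroll x) n : ℤ) = (∑ a, (ε a : ℤ)) ^ n := by
  have h_prod (x : ZMod n → A) : (wordSign ε (unroll x) n : ℤ) = ∏ a, (ε (x a) : ℤ) := by
    rw [wordSign, Units.coe_prod]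
    exact prod_bij' (fun k _ => (k : ZMod n)) (fun a _ => a.val) (by simp)
      (fun a _ => mem_range.mpr a.val_lt) (fun k hk => ZMod.val_cast_of_lt (mem_range.mp hk))
      (fun a _ => ZMod.natCast_zmod_val a) fun _ _ => rfl
  rw [sum_congr rfl fun x _ => h_prod x]
  simpa [ZMod.card] using
    (prod_univ_sum (fun _ : ZMod n => (univ : Finset A)) fun _ a => (ε a : ℤ)).symm

/-- The number of words of length `n`, each counted with the number of its rankings: once if it is
primitive, twice if it is the square of a primitive word of sign `-1`. A word is encoded as the
sequence obtained by repeating it. -/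
def rankedWordCount (ε : A → ℤˣ) (n : ℕ) : ℕ :=
  {y : ℕ → A | leastPeriod y = n}.ncard
    + 2 * {y | 2 * leastPeriod y = n ∧ wordSign ε y (leastPeriod y) = -1}.ncard

lemma rankedWordCount_eq_sum [Fintype A] (ε : A → ℤˣ) {m : ℕ} [NeZero n] (hmn : m ∣ n) :
    rankedWordCount ε m = ∑ x : ZMod n → A, ((if leastPeriod (unroll x) = m then 1 else 0)
      + if 2 * leastPeriod (unroll x) = m
          ∧ wordSign ε (unroll x) (leastPeriod (unroll x)) = -1 then 2 else 0) := by
  rw [rankedWordCount, ncard_eq_card_unroll (n := n) fun y hy => hy ▸ hmn,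
    ncard_eq_card_unroll (n := n) fun y hy => (Dvd.intro_left 2 hy.1).trans hmn, sum_add_distrib,
    card_filter, card_filter, mul_sum]
  simp only [mul_ite, mul_one, mul_zero]
  congr!

lemma card_mul_sum_cyclicSet_compatibleCount_eq_rankedWordCount [LinearOrder A] [Fintype A]
    (hn : 2 ≤ n) (ε : A → ℤˣ) :
    n * ∑ π ∈ cyclicSet n, compatibleCount ε π = rankedWordCount ε n := by
  have : NeZero n := ⟨by lia⟩
  rw [card_mul_sum_cyclicSet_compatibleCount hn, rankedWordCount_eq_sum ε dvd_rfl]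
  exact sum_congr rfl fun x _ => card_isRanking ε x

lemma sum_odd_divisors_leastPeriod [NeZero n] (ε : A → ℤˣ) {y : ℕ → A} (hy : leastPeriod y ∣ n) :
    ∑ d ∈ n.divisors with Odd d, ((if leastPeriod y = n / d then 1 else 0)
        + if 2 * leastPeriod y = n / d ∧ wordSign ε y (leastPeriod y) = -1 then 2 else 0)
      = 1 - if 2 * leastPeriod y ∣ n then (wordSign ε y (n / 2) : ℤ) else 0 := by
  have hp := periodic_iff_leastPeriod_dvd.mpr (dvd_refl (leastPeriod y))
  obtain ⟨q, hq⟩ := hy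
  generalize leastPeriod y = p at *
  have hp_pos : 0 < p := Nat.pos_of_mul_pos_right (hq ▸ NeZero.pos n)
  simp only [sum_add_distrib, ite_and (2 * p = _), sum_odd_divisors_ite_div_eq (NeZero.ne n)]
  rcases Nat.even_or_odd' q with ⟨r, rfl | rfl⟩
  · have h_quot : n / p = 2 * r := Nat.div_eq_of_eq_mul_right hp_pos hq
    have h_quot_two : n / (2 * p) = r :=
      Nat.div_eq_of_eq_mul_right (by positivity) (by rw [hq]; ring)
    have h_half : n / 2 = p * r := Nat.div_eq_of_eq_mul_right two_pos (by rw [hq]; ring)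
    have h_dvd : 2 * p ∣ n := ⟨r, by rw [hq]; ring⟩
    simp only [h_quot, h_quot_two, h_half, h_dvd, Nat.not_odd_iff_even.mpr (even_two_mul r),
      wordSign_mul_of_periodic ε hp]
    rcases Int.units_eq_one_or (wordSign ε y p) with hs | hs
    · simp [hs]
    · rcases r.even_or_odd with hr | hr
      · simp [hs, hr]
      · simp [hs, hr]
  · have h_quot : n / p = 2 * r + 1 := Nat.div_eq_of_eq_mul_right hp_pos hq
    have h_dvd : ¬ 2 * p ∣ n := by
      rw [hq, mul_comm 2, Nat.mul_dvd_mul_iff_left hp_pos]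
      lia
    simp [h_quot, h_dvd, Dvd.intro _ hq.symm]

lemma sum_odd_divisors_rankedWordCount [Fintype A] (ε : A → ℤˣ) (hn : 0 < n) :
    ∑ d ∈ n.divisors with Odd d, (rankedWordCount ε (n / d) : ℤ)
      = Fintype.card A ^ n - if Even n then (∑ a, (ε a : ℤ)) ^ (n / 2) else 0 := by
  have : NeZero n := ⟨hn.ne'⟩
  have h_words : ∑ d ∈ n.divisors with Odd d, (rankedWordCount ε (n / d) : ℤ)
      = ∑ x : ZMod n → A, (1 - if 2 * leastPeriod (unroll x) ∣ n
          then (wordSign ε (unroll x) (n / 2) : ℤ) else 0) := by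
    rw [← sum_congr rfl fun x _ => sum_odd_divisors_leastPeriod ε (leastPeriod_unroll_dvd (x := x)),
      sum_comm]
    refine sum_congr rfl fun d hd => ?_
    rw [rankedWordCount_eq_sum ε
      (Nat.div_dvd_of_dvd (Nat.dvd_of_mem_divisors (mem_filter.mp hd).1))]
    push_cast
    rfl
  rw [h_words, sum_sub_distrib]
  congr 1
  · simp [ZMod.card]
  split_ifs with h_even
  · have : NeZero (n / 2) := ⟨by obtain ⟨k, hk⟩ := h_even; lia⟩
    have h_half (p : ℕ) : 2 * p ∣ n ↔ p ∣ n / 2 := (Nat.dvd_div_iff_mul_dvd h_even.two_dvd).symm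
    simp only [h_half]
    rw [← sum_wordSign_unroll, sum_unroll_of_dvd (Nat.div_dvd_of_dvd h_even.two_dvd)
      fun y => (wordSign ε y (n / 2) : ℤ)]
  · exact sum_eq_zero fun x _ => if_neg fun h =>
      h_even (even_iff_two_dvd.mpr (dvd_of_mul_right_dvd h))

lemma sum_odd_divisors_rankedWordCount_altSign (m : ℕ) (hn : 0 < n) :
    ∑ d ∈ n.divisors with Odd d, (rankedWordCount (altSign m) (n / d) : ℤ)
      = (m : ℤ) ^ n - if Even n ∧ Odd m then 1 else 0 := by
  rw [sum_odd_divisors_rankedWordCount _ hn, Fintype.card_fin, sum_altSign, ite_and]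
  by_cases h_even : Even n
  · have h_half : n / 2 ≠ 0 := by obtain ⟨k, hk⟩ := h_even; lia
    rw [if_pos h_even, if_pos h_even, ite_pow, one_pow, zero_pow h_half]
  · rw [if_neg h_even, if_neg h_even]

lemma rankedWordCount_altSign (hn : 2 ≤ n) (m : ℕ) :
    (rankedWordCount (altSign m) n : ℤ)
      = ∑ d ∈ n.divisors with Odd d, ArithmeticFunction.moebius d * (m : ℤ) ^ (n / d)
        - if (∃ j : ℕ, n = 2 ^ j) ∧ Odd m then 1 else 0 := by
  have h_even {d : ℕ} (hd : d ∈ n.divisors.filter Odd) : Even (n / d) ↔ Even n := by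
    rw [mem_filter] at hd
    conv_rhs => rw [← Nat.div_mul_cancel (Nat.dvd_of_mem_divisors hd.1)]
    simp [Nat.even_mul, hd.2]
  have h_even_of_pow : (∃ j : ℕ, n = 2 ^ j) → Even n := by
    rintro ⟨j, rfl⟩
    exact even_two.pow_of_ne_zero (by rintro rfl; simp at hn)
  rw [eq_sum_odd_divisors_moebius_mul (f := fun k => (rankedWordCount (altSign m) k : ℤ))
    (fun k hk => sum_odd_divisors_rankedWordCount_altSign m hk) (by lia)]
  simp only [Int.cast_id, mul_sub, sum_sub_distrib]
  congr 1
  rw [sum_congr rfl fun d hd => congrArg _ (if_congr (and_congr_left' (h_even hd)) rfl rfl),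
    ← sum_mul, sum_odd_divisors_moebius (by lia)]
  by_cases h : ∃ j : ℕ, n = 2 ^ j
  · simp [h, h_even_of_pow h]
  · simp [h]

end RankedWordCount

section CyclicUpDownRuns

variable {n : ℕ}

lemma mul_sum_cyclicSet_udr_eq_mk_rankedWordCount (hn : 2 ≤ n) (R : Type*) [CommRing R] :
    (n : R⟦X⟧) * (1 + X) ^ 2 * ∑ π ∈ cyclicSet n,
        (2 : R⟦X⟧) ^ udr n π * X ^ udr n π * (1 + X ^ 2) ^ (n - udr n π)
      = 2 * ((1 - X ^ 2) ^ (n + 1)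
          * PowerSeries.mk fun m => (rankedWordCount (altSign m) n : R)) := by
  obtain ⟨k, rfl⟩ := Nat.exists_eq_succ_of_ne_zero (by lia : n ≠ 0)
  have h_mk : (PowerSeries.mk fun m => (rankedWordCount (altSign m) (k + 1) : R))
      = ((k + 1 : ℕ) : R⟦X⟧) * ∑ π ∈ cyclicSet (k + 1),
          PowerSeries.mk fun m => (compatibleCount (altSign m) π : R) := by
    ext m
    rw [← map_natCast (PowerSeries.C (R := R)), PowerSeries.coeff_C_mul, map_sum,
      PowerSeries.coeff_mk, ← card_mul_sum_cyclicSet_compatibleCount_eq_rankedWordCount hn]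
    simp
  rw [h_mk, mul_left_comm _ ((k + 1 : ℕ) : R⟦X⟧), mul_left_comm 2, mul_assoc]
  simp only [mul_sum (s := cyclicSet (k + 1))]
  exact sum_congr rfl fun π _ => congrArg _
    (two_mul_one_sub_X_sq_pow_mul_mk_compatibleCount_altSign π R).symm

lemma one_sub_X_sq_pow_mul_mk_rankedWordCount (hn : 2 ≤ n) (R : Type*) [CommRing R] :
    (1 - X ^ 2) ^ (n + 1) * PowerSeries.mk (fun m => (rankedWordCount (altSign m) n : R))
      = ∑ d ∈ n.divisors with Odd d, ((ArithmeticFunction.moebius d : ℤ) : R⟦X⟧)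
            * (1 - X ^ 2) ^ (n - n / d)
            * ((1 - X ^ 2) ^ (n / d + 1) * PowerSeries.mk fun m => (m : R) ^ (n / d))
          - if ∃ j : ℕ, n = 2 ^ j then X * (1 - X ^ 2) ^ n else 0 := by
  have h_mk : PowerSeries.mk (fun m => (rankedWordCount (altSign m) n : R))
      = ∑ d ∈ n.divisors with Odd d, ((ArithmeticFunction.moebius d : ℤ) : R⟦X⟧)
            * PowerSeries.mk (fun m => (m : R) ^ (n / d))
          - if ∃ j : ℕ, n = 2 ^ j then PowerSeries.mk fun m => if Odd m then (1 : R) else 0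
            else 0 := by
    ext m
    have h := congrArg (Int.cast (R := R)) (rankedWordCount_altSign hn m)
    push_cast at h
    rw [PowerSeries.coeff_mk, h, map_sub, map_sum]
    congr 1
    · refine sum_congr rfl fun d _ => ?_
      rw [← map_intCast (PowerSeries.C (R := R)), PowerSeries.coeff_C_mul, PowerSeries.coeff_mk]
    · rw [ite_and]
      split_ifs <;> simp [*]
  rw [h_mk, mul_sub, mul_sum]
  congr 1
  · refine sum_congr rfl fun d _ => ?_
    have h_exp : n + 1 = n - n / d + (n / d + 1) := by
      have := Nat.div_le_self n d
      lia
    have h_pow : (1 - X ^ 2 : R⟦X⟧) ^ (n + 1)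
        = (1 - X ^ 2) ^ (n - n / d) * (1 - X ^ 2) ^ (n / d + 1) := by
      rw [← pow_add, ← h_exp]
    rw [h_pow]
    ring
  · split_ifs
    · rw [pow_succ, mul_assoc, one_sub_X_sq_mul_mk_odd, mul_comm]
    · exact mul_zero _

theorem natCast_mul_sum_cyclicSet_udr (hn : 2 ≤ n) {B : ℕ → Polynomial ℚ}
    (hB : ∀ m : ℕ, (B m : ℚ⟦X⟧)
      = (1 - X) ^ (m + 1) * PowerSeries.mk fun k => ((2 * k + 1 : ℕ) : ℚ) ^ m) :
    (n : Polynomial ℚ) * (1 + Polynomial.X) ^ 2 * ∑ π ∈ cyclicSet n,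
        (2 : Polynomial ℚ) ^ udr n π * Polynomial.X ^ udr n π
          * (1 + Polynomial.X ^ 2) ^ (n - udr n π)
      = 2 * (∑ d ∈ n.divisors with Odd d, ((ArithmeticFunction.moebius d : ℤ) : Polynomial ℚ)
            * (1 - Polynomial.X ^ 2) ^ (n - n / d)
            * (2 ^ (n / d) * (eulerianA (n / d)).comp (Polynomial.X ^ 2)
              + Polynomial.X * (B (n / d)).comp (Polynomial.X ^ 2))
          - if ∃ j : ℕ, n = 2 ^ j then Polynomial.X * (1 - Polynomial.X ^ 2) ^ n else 0) := by
  apply Polynomial.coe_injective ℚ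
  have h_series := mul_sum_cyclicSet_udr_eq_mk_rankedWordCount hn ℚ
  rw [one_sub_X_sq_pow_mul_mk_rankedWordCount hn] at h_series
  have h_terms : ∀ d ∈ n.divisors.filter Odd,
      ((1 - X ^ 2) ^ (n / d + 1) * PowerSeries.mk fun m => (m : ℚ) ^ (n / d))
        = ((2 ^ (n / d) * (eulerianA (n / d)).comp (Polynomial.X ^ 2)
            + Polynomial.X * (B (n / d)).comp (Polynomial.X ^ 2) : Polynomial ℚ) : ℚ⟦X⟧) := by
    intro d hd
    have h_dvd := Nat.dvd_of_mem_divisors (mem_filter.mp hd).1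
    exact (coe_two_pow_mul_eulerianA_comp_add (Nat.div_ne_zero_iff_of_dvd h_dvd |>.mpr
      ⟨by lia, ne_zero_of_dvd_ne_zero (by lia) h_dvd⟩) (hB _)).symm
  rw [sum_congr (s₁ := n.divisors.filter Odd) rfl
    fun d hd => congrArg (_ * (1 - X ^ 2) ^ (n - n / d) * ·) (h_terms d hd)] at h_series
  have h_coe (p : Polynomial ℚ) : (p : ℚ⟦X⟧) = Polynomial.coeToPowerSeries.ringHom p := rfl
  simp only [h_coe] at h_series ⊢
  simp only [map_mul, map_add, map_sub, map_pow, map_sum, map_natCast, map_intCast, map_one,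
    map_ofNat, apply_ite Polynomial.coeToPowerSeries.ringHom, map_zero] at h_series ⊢
  simpa only [Polynomial.coeToPowerSeries.ringHom_apply, Polynomial.coe_X] using h_series

end CyclicUpDownRuns

theorem stmt9 (n : ℕ) (hn : 2 ≤ n) (B : ℕ → Polynomial ℚ)
    (hB : ∀ m : ℕ, ((B m : PowerSeries ℚ))
      = (1 - PowerSeries.X) ^ (m + 1)
          * PowerSeries.mk (fun k => ((2 * k + 1 : ℕ) : ℚ) ^ m)) :
    ((∃ j : ℕ, n = 2 ^ j) →
      (n : Polynomial ℚ) * (1 + Polynomial.X) ^ 2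
          * ∑ π ∈ cyclicSet n,
              (2 : Polynomial ℚ) ^ udr n π * Polynomial.X ^ udr n π
                * (1 + Polynomial.X ^ 2) ^ (n - udr n π)
        = 2 * (2 ^ n * (eulerianA n).comp (Polynomial.X ^ 2)
            + Polynomial.X * (B n).comp (Polynomial.X ^ 2)
            - Polynomial.X * (1 - Polynomial.X ^ 2) ^ n)) ∧
    (¬ (∃ j : ℕ, n = 2 ^ j) →
      (n : Polynomial ℚ) * (1 + Polynomial.X) ^ 2
          * ∑ π ∈ cyclicSet n,
              (2 : Polynomial ℚ) ^ udr n π * Polynomial.X ^ udr n π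
                * (1 + Polynomial.X ^ 2) ^ (n - udr n π)
        = 2 * ∑ d ∈ n.divisors.filter (fun d => Odd d),
            ((ArithmeticFunction.moebius d : ℤ) : Polynomial ℚ)
              * (1 - Polynomial.X ^ 2) ^ (n - n / d)
              * (2 ^ (n / d) * (eulerianA (n / d)).comp (Polynomial.X ^ 2)
                  + Polynomial.X * (B (n / d)).comp (Polynomial.X ^ 2))) := by
  have h_udr := natCast_mul_sum_cyclicSet_udr hn hB
  constructor
  · rintro ⟨j, hj⟩
    have h_divisors : {d ∈ n.divisors | Odd d} = {1} := by
      simpa [hj] using filter_odd_divisors_two_pow_mul j odd_one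
    rw [h_udr, if_pos ⟨j, hj⟩, h_divisors]
    simp
  · intro h
    rw [h_udr, if_neg h, sub_zero]

end
end
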